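/- The function u is infinity-harmonic in the classical sense away from the diagonal: at every point (x,y) ∈ Ω₁ with x ≠ y, u is twice differentiable and Δ∞u := u_x²·u_{xx} + 2·u_x·u_y·u_{xy} + u_y²·u_{yy} = 0. -/

import Mathlib

/-!
Put `s = log r` and `w(s,θ) = W(e^s,θ)`. The series for `w` is a sum of modes `e^{m² s} sin(mθ)`, so `w`
solves the backward heat equation `w_θθ = -w_s`. The coefficients are chosen so that `w_sθ - w_θ` is a
constant times `e^{4s}` times a theta series in `2θ` (`Cc_eq_theta`). The Jacobi triple product writes
that series as `cos` times a product of decreasing positive factors (`thetaC_anti`); hence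
`w_sθ - w_θ ≠ 0` on `(0, π/2)` except at `θ = π/4` (`Cc_ne`), and its `θ`-derivative gives
`w_ss - w_s > 0` on `(0, π/2)` (`Mm_pos`).

Let `F(s,θ) = e^s (x cos θ + y sin θ) - w(s,θ)`. Positivity of `w_ss - w_s` says that `e^{-s} w_s` is
increasing, so `F(·,θ)` has at most one critical point, which is then its maximum (`GG_eq`). It exists
(`exists_sigma`) because the boundary values `w_θ(0,θ) = cos θ - sin θ` (`wt_zero`) and the heat equation
make `w_s` at least about `cos θ + sin θ` near `s = 0` (`ws_liminf`). By the heat equation again, `F_θθ = -F_s`,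
which vanishes along the maximizers, so the inner maximum is convex in `θ` (`hh_deriv`). Its behaviour at
the two ends of the interval (`near_zero`, `near_pi_div_two`) forces an interior minimum, and `u(x,y)` is the
value of `F` at any critical point (`exists_crit`, `u_eq_of_crit`).

Finally the equations `F_s = F_θ = 0` express `(x,y)` as a function `Φ(s,θ)` with Jacobian determinant
`-B²`, where `B = e^{-s}(w_sθ - w_θ)`. For `x ≠ y` the critical `θ` is not `π/4`, so `Φ` has a local `C²` inverse
and `u` is `C²`. The envelope theorem gives `∇u = e^s (cos θ, sin θ)` (`u_fderiv`), and differentiating once more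
through the inverse Jacobian yields `Δ_∞ u = 0`.
-/

open Real Set Topology Filter

/-- `mIdx n = 4(n+1) - 2 = 4n + 2`, the odd-indexed frequencies `2, 6, 10, …`. -/
def mIdx (n : ℕ) : ℕ := 4 * n + 2

/-- `W(r,θ) = (8/π) ∑_{n≥1} r^{mₙ²} sin(mₙ θ) / ((mₙ² − 1) mₙ)` with `mₙ = 4n − 2`. -/
noncomputable def W (r θ : ℝ) : ℝ :=
  (8 / π) * ∑' n : ℕ,
    r ^ (mIdx n ^ 2) * Real.sin ((mIdx n : ℝ) * θ) / (((mIdx n : ℝ) ^ 2 - 1) * (mIdx n : ℝ))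

/-- The minimax formula `u(x,y) = min_{θ∈[0,π/2]} max_{r∈[0,1]} ( r(x cos θ + y sin θ) − W(r,θ) )`.
(The extrema are attained, so `⨅`/`⨆` over the compact index sets agree with min/max.) -/
noncomputable def u (x y : ℝ) : ℝ :=
  ⨅ θ : Icc (0 : ℝ) (π / 2), ⨆ r : Icc (0 : ℝ) 1,
    ((r : ℝ) * (x * Real.cos (θ : ℝ) + y * Real.sin (θ : ℝ)) - W (r : ℝ) (θ : ℝ))

/-! ### Caloric sine series -/

/-- The frequencies as real numbers. -/
noncomputable def mm (n : ℕ) : ℝ := 4 * n + 2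

lemma mm_ge (n : ℕ) : 2 ≤ mm n := by unfold mm; have : (0:ℝ) ≤ n := n.cast_nonneg; linarith

lemma mm_pos (n : ℕ) : 0 < mm n := lt_of_lt_of_le two_pos (mm_ge n)

lemma cast_mIdx (n : ℕ) : (mIdx n : ℝ) = mm n := by unfold mIdx mm; push_cast; ring

lemma mIdx_inj : Function.Injective mIdx := by intro a b h; unfold mIdx at h; omega

/-- Polynomially bounded coefficient sequences. -/
def PB (c : ℕ → ℝ) : Prop := ∃ (k : ℕ) (C : ℝ), ∀ n, |c n| ≤ C * mm n ^ k

lemma PB.mul_mm {c : ℕ → ℝ} (h : PB c) : PB (fun n => mm n * c n) := by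
  obtain ⟨k, C, h⟩ := h
  refine ⟨k + 1, C, fun n => ?_⟩
  rw [abs_mul, abs_of_pos (mm_pos n), pow_succ]
  nlinarith [h n, mm_pos n]

lemma PB.of_le_one {c : ℕ → ℝ} (h : ∀ n, |c n| ≤ 1) : PB c := ⟨0, 1, fun n => by simpa using h n⟩

/-- The caloric series `∑ c_n e^{m² s} sin(m θ + φ)`, where `s = log r`. -/
noncomputable def K (c : ℕ → ℝ) (φ s θ : ℝ) : ℝ :=
  ∑' n, c n * (Real.exp (mm n ^ 2 * s) * Real.sin (mm n * θ + φ))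

lemma summable_bound {c : ℕ → ℝ} (h : PB c) {s₀ : ℝ} (hs : s₀ < 0) :
    Summable (fun n => |c n| * Real.exp (mm n ^ 2 * s₀)) := by
  obtain ⟨k, C, h⟩ := h
  have h1 := (Real.summable_pow_mul_exp_neg_nat_mul k (neg_pos.2 hs)).comp_injective mIdx_inj
  refine Summable.of_nonneg_of_le (fun n => by positivity) (fun n => ?_) (h1.mul_left C)
  simp only [Function.comp_apply, cast_mIdx, neg_neg]
  have h2 : Real.exp (mm n ^ 2 * s₀) ≤ Real.exp (s₀ * mm n) := by
    apply Real.exp_le_exp.2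
    have := mm_ge n
    nlinarith [mul_nonneg (mul_nonneg (by linarith : 0 ≤ mm n) (by linarith : 0 ≤ mm n - 1)) (by linarith : 0 ≤ -s₀)]
  calc _ ≤ (C * mm n ^ k) * Real.exp (s₀ * mm n) :=
        mul_le_mul (h n) h2 (by positivity) ((abs_nonneg _).trans (h n))
    _ = _ := by ring

lemma term_bound (c : ℕ → ℝ) (φ s s₀ θ : ℝ) (h : s ≤ s₀) (n : ℕ) :
    ‖c n * (Real.exp (mm n ^ 2 * s) * Real.sin (mm n * θ + φ))‖
      ≤ |c n| * Real.exp (mm n ^ 2 * s₀) := by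
  rw [norm_mul, norm_mul, Real.norm_eq_abs, Real.norm_eq_abs, Real.norm_eq_abs, Real.abs_exp]
  have h1 : Real.exp (mm n ^ 2 * s) ≤ Real.exp (mm n ^ 2 * s₀) := by gcongr
  have h2 := Real.abs_sin_le_one (mm n * θ + φ)
  refine mul_le_mul_of_nonneg_left ?_ (abs_nonneg _)
  calc _ ≤ Real.exp (mm n ^ 2 * s₀) * 1 := mul_le_mul h1 h2 (abs_nonneg _) (Real.exp_nonneg _)
    _ = _ := mul_one _

lemma K_summable {c : ℕ → ℝ} (h : PB c) (φ : ℝ) {s : ℝ} (hs : s < 0) (θ : ℝ) :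
    Summable (fun n => c n * (Real.exp (mm n ^ 2 * s) * Real.sin (mm n * θ + φ))) :=
  Summable.of_norm_bounded (summable_bound h hs) (term_bound c φ s s θ le_rfl)

lemma K_add {c d : ℕ → ℝ} (hc : PB c) (hd : PB d) (φ : ℝ) {s : ℝ} (hs : s < 0) (θ : ℝ) :
    K c φ s θ + K d φ s θ = K (fun n => c n + d n) φ s θ := by
  unfold K
  rw [← (K_summable hc φ hs θ).tsum_add (K_summable hd φ hs θ)]
  exact tsum_congr fun n => by ring

lemma K_phase (c : ℕ → ℝ) (s θ : ℝ) : K c (π / 2 + π / 2) s θ = - K c 0 s θ := by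
  unfold K
  rw [← tsum_neg]
  refine tsum_congr fun n => ?_
  rw [show mm n * θ + (π / 2 + π / 2) = mm n * θ + π by ring, Real.sin_add_pi, add_zero]
  ring

/-- Termwise differentiation. A `θ`-derivative multiplies `c` by `m` and shifts the phase by `π/2`; an
`s`-derivative multiplies `c` by `m²`. -/
lemma K_hasFDerivAt {c : ℕ → ℝ} (h : PB c) (φ : ℝ) {s : ℝ} (hs : s < 0) (θ : ℝ) :
    HasFDerivAt (fun p : ℝ × ℝ => K c φ p.1 p.2)
      (K (fun n => mm n * (mm n * c n)) φ s θ • ContinuousLinearMap.fst ℝ ℝ ℝ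
        + K (fun n => mm n * c n) (φ + π / 2) s θ • ContinuousLinearMap.snd ℝ ℝ ℝ) (s, θ) := by
  set S : Set (ℝ × ℝ) := Iio (s / 2) ×ˢ univ with hS
  have hs2 : s / 2 < 0 := by linarith
  have hSo : IsOpen S := isOpen_Iio.prod isOpen_univ
  have hSc : IsPreconnected S := ((convex_Iio _).prod convex_univ).isPreconnected
  have hmem : (s, θ) ∈ S := ⟨by simp only [mem_Iio]; linarith, mem_univ _⟩
  have hb1 := summable_bound h.mul_mm.mul_mm hs2
  have hb2 := summable_bound h.mul_mm hs2
  let f' : ℕ → ℝ × ℝ → (ℝ × ℝ →L[ℝ] ℝ) := fun n p =>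
    ((fun n => mm n * (mm n * c n)) n * (Real.exp (mm n ^ 2 * p.1) * Real.sin (mm n * p.2 + φ))) • ContinuousLinearMap.fst ℝ ℝ ℝ
    + ((fun n => mm n * c n) n * (Real.exp (mm n ^ 2 * p.1) * Real.sin (mm n * p.2 + (φ + π / 2)))) • ContinuousLinearMap.snd ℝ ℝ ℝ
  have key := hasFDerivAt_tsum_of_isPreconnected (𝕜 := ℝ) (f := fun n (p : ℝ × ℝ) => c n * (Real.exp (mm n ^ 2 * p.1) * Real.sin (mm n * p.2 + φ)))
    (f' := f') (hb1.add hb2) hSo hSc ?_ ?_ hmem (K_summable h φ hs θ) hmem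
  · refine HasFDerivAt.congr_fderiv key ?_
    have e1 := K_summable h.mul_mm.mul_mm φ hs θ
    have e2 := K_summable h.mul_mm (φ + π / 2) hs θ
    simp only [f']
    rw [Summable.tsum_add (e1.smul_const _) (e2.smul_const _), e1.tsum_smul_const, e2.tsum_smul_const]
    rfl
  · rintro n ⟨a, b⟩ -
    have h1 : HasFDerivAt (fun p : ℝ × ℝ => p.1) (ContinuousLinearMap.fst ℝ ℝ ℝ) (a, b) := hasFDerivAt_fst
    have h2 : HasFDerivAt (fun p : ℝ × ℝ => p.2) (ContinuousLinearMap.snd ℝ ℝ ℝ) (a, b) := hasFDerivAt_snd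
    have := (((h1.const_mul (mm n ^ 2)).exp).mul (((h2.const_mul (mm n)).add_const φ).sin)).const_mul (c n)
    refine this.congr_fderiv ?_
    simp only [f', ← add_assoc, Real.sin_add_pi_div_two]
    ext <;> simp <;> ring
  · rintro n ⟨a, b⟩ hab
    have ha : a ≤ s / 2 := le_of_lt hab.1
    refine (norm_add_le _ _).trans (add_le_add ?_ ?_)
    · rw [norm_smul]
      exact (mul_le_of_le_one_right (norm_nonneg _) (ContinuousLinearMap.norm_fst_le ℝ ℝ ℝ)).trans
        (term_bound (fun n => mm n * (mm n * c n)) φ a _ b ha n)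
    · rw [norm_smul]
      exact (mul_le_of_le_one_right (norm_nonneg _) (ContinuousLinearMap.norm_snd_le ℝ ℝ ℝ)).trans
        (term_bound (fun n => mm n * c n) (φ + π / 2) a _ b ha n)

lemma K_contDiffOn (N : ℕ) : ∀ {c : ℕ → ℝ} (_ : PB c) (φ : ℝ),
    ContDiffOn ℝ N (fun p : ℝ × ℝ => K c φ p.1 p.2) (Iio 0 ×ˢ univ) := by
  have hSo : IsOpen (Iio (0:ℝ) ×ˢ (univ : Set ℝ)) := isOpen_Iio.prod isOpen_univ
  induction N with
  | zero =>
    intro c h φ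
    refine contDiffOn_zero.2 ?_
    rintro ⟨a, b⟩ ⟨ha, -⟩
    exact (K_hasFDerivAt h φ ha b).continuousAt.continuousWithinAt
  | succ N ih =>
    intro c h φ
    push_cast
    rw [contDiffOn_succ_iff_fderiv_of_isOpen hSo]
    refine ⟨?_, by simp, ?_⟩
    · rintro ⟨a, b⟩ ⟨ha, -⟩
      exact (K_hasFDerivAt h φ ha b).differentiableAt.differentiableWithinAt
    · have : ContDiffOn ℝ N (fun p : ℝ × ℝ => K (fun n => mm n * (mm n * c n)) φ p.1 p.2 • ContinuousLinearMap.fst ℝ ℝ ℝ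
        + K (fun n => mm n * c n) (φ + π / 2) p.1 p.2 • ContinuousLinearMap.snd ℝ ℝ ℝ) (Iio (0:ℝ) ×ˢ (univ : Set ℝ)) :=
        ((ih h.mul_mm.mul_mm φ).smul contDiffOn_const).add ((ih h.mul_mm (φ + π / 2)).smul contDiffOn_const)
      refine this.congr ?_
      rintro ⟨a, b⟩ ⟨ha, -⟩
      exact (K_hasFDerivAt h φ ha b).fderiv

lemma K_contDiffAt (N : ℕ) {c : ℕ → ℝ} (h : PB c) (φ : ℝ) {s : ℝ} (hs : s < 0) (θ : ℝ) :
    ContDiffAt ℝ N (fun p : ℝ × ℝ => K c φ p.1 p.2) (s, θ) :=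
  (K_contDiffOn N h φ).contDiffAt ((isOpen_Iio.prod isOpen_univ).mem_nhds ⟨hs, mem_univ _⟩)

lemma K_hasDerivAt_s {c : ℕ → ℝ} (h : PB c) (φ : ℝ) {s : ℝ} (hs : s < 0) (θ : ℝ) :
    HasDerivAt (fun s => K c φ s θ) (K (fun n => mm n * (mm n * c n)) φ s θ) s := by
  have := (K_hasFDerivAt h φ hs θ).comp_hasDerivAt s ((hasDerivAt_id s).prodMk (hasDerivAt_const s θ))
  exact this.congr_deriv (by simp)

lemma K_hasDerivAt_t {c : ℕ → ℝ} (h : PB c) (φ : ℝ) {s : ℝ} (hs : s < 0) (θ : ℝ) :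
    HasDerivAt (fun θ => K c φ s θ) (K (fun n => mm n * c n) (φ + π / 2) s θ) θ := by
  have := (K_hasFDerivAt h φ hs θ).comp_hasDerivAt θ ((hasDerivAt_const θ s).prodMk (hasDerivAt_id θ))
  exact this.congr_deriv (by simp)

/-- With absolutely summable coefficients the series is continuous up to `s = 0` (i.e. `r = 1`). -/
lemma K_continuousOn {c : ℕ → ℝ} (h : Summable (fun n => |c n|)) (φ : ℝ) :
    ContinuousOn (fun p : ℝ × ℝ => K c φ p.1 p.2) (Iic 0 ×ˢ univ) := by
  refine continuousOn_tsum (fun n => ?_) h ?_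
  · fun_prop
  · rintro n ⟨a, b⟩ ⟨ha, -⟩
    simpa using term_bound c φ a 0 b ha n

/-- The `θ`-derivative is also available at `s = 0` when the differentiated series still converges
absolutely there. -/
lemma K_hasDerivAt_t' {c : ℕ → ℝ} (h : Summable (fun n => |c n|))
    (h' : Summable (fun n => |mm n * c n|)) (φ : ℝ) {s : ℝ} (hs : s ≤ 0) (θ : ℝ) :
    HasDerivAt (fun θ => K c φ s θ) (K (fun n => mm n * c n) (φ + π / 2) s θ) θ := by
  refine hasDerivAt_tsum (𝕜 := ℝ) (y₀ := θ)
    (g := fun n θ => c n * (Real.exp (mm n ^ 2 * s) * Real.sin (mm n * θ + φ)))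
    (g' := fun n θ => mm n * c n * (Real.exp (mm n ^ 2 * s) * Real.sin (mm n * θ + (φ + π / 2))))
    h' (fun n y => ?_) (fun n y => ?_) ?_ θ
  · have := (((((hasDerivAt_id y).const_mul (mm n)).add_const φ).sin).const_mul
      (Real.exp (mm n ^ 2 * s))).const_mul (c n)
    refine this.congr_deriv ?_
    simp only [← add_assoc, Real.sin_add_pi_div_two, id]
    ring
  · simpa using term_bound (fun n => mm n * c n) (φ + π / 2) s 0 y hs n
  · exact Summable.of_norm_bounded h fun n => by simpa using term_bound c φ s 0 θ hs n

/-! ### The finite Jacobi triple product -/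

/-- The finite Pochhammer product `(Q;Q)_n` with `Q = P²`. -/
noncomputable def poch (P : ℝ) (n : ℕ) : ℝ := ∏ k ∈ Finset.range n, (1 - P ^ (2 * (k + 1)))

/-- `1 / (Q;Q)_n`, extended by `0` to negative integers. -/
noncomputable def rpoch (P : ℝ) (n : ℤ) : ℝ := if n < 0 then 0 else (poch P n.toNat)⁻¹

/-- Coefficients of the finite Jacobi triple product: `P^{j(j+1)}` times the `Q`-binomial coefficient
`[2N+1 choose N-j]`, with `Q = P²`. -/
noncomputable def jcoef (P : ℝ) (N : ℕ) (j : ℤ) : ℝ :=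
  P ^ (j * (j + 1)) * poch P (2 * N + 1) * rpoch P (N - j) * rpoch P (N + 1 + j)

/-- The product side of the finite Jacobi triple product, without its factor `2 cos z`; the `k`-th factor is
`|1 + P^{2(k+1)} e^{2iz}|²`. -/
noncomputable def jfac (P : ℝ) (N : ℕ) (z : ℝ) : ℝ :=
  ∏ k ∈ Finset.range N, (1 + 2 * P ^ (2 * (k + 1)) * Real.cos (2 * z) + P ^ (4 * (k + 1)))

lemma powEven_lt_one {P : ℝ} (h0 : 0 < P) (h1 : P < 1) (k : ℕ) : P ^ (2 * (k + 1)) < 1 :=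
  pow_lt_one₀ h0.le h1 (by omega)

lemma poch_pos {P : ℝ} (h0 : 0 < P) (h1 : P < 1) (n : ℕ) : 0 < poch P n :=
  Finset.prod_pos fun k _ => by linarith [powEven_lt_one h0 h1 k]

lemma poch_succ (P : ℝ) (n : ℕ) : poch P (n + 1) = poch P n * (1 - P ^ (2 * (n + 1))) :=
  Finset.prod_range_succ _ _

lemma poch_anti {P : ℝ} (h0 : 0 < P) (h1 : P < 1) : Antitone (poch P) := by
  refine antitone_nat_of_succ_le fun n => ?_
  rw [poch_succ]
  have := poch_pos h0 h1 n
  have : 0 < P ^ (2 * (n + 1)) := by positivity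
  nlinarith

lemma poch_lim {P : ℝ} (h0 : 0 < P) (h1 : P < 1) :
    ∃ e : ℝ, 0 < e ∧ Tendsto (poch P) atTop (𝓝 e) ∧ ∀ n, e ≤ poch P n := by
  have hs : Summable (fun k : ℕ => -(P ^ (2 * (k + 1)))) := by
    refine Summable.neg ?_
    have : Summable (fun k : ℕ => P ^ 2 * (P ^ 2) ^ k) :=
      (summable_geometric_of_lt_one (by positivity) (by nlinarith)).mul_left _
    refine this.congr fun k => by ring
  have hl := (Real.summable_log_one_add_of_summable hs).hasSum.tendsto_sum_nat
  set L := ∑' k : ℕ, Real.log (1 + -(P ^ (2 * (k + 1))))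
  have ht : Tendsto (poch P) atTop (𝓝 (Real.exp L)) := by
    refine ((Real.continuous_exp.tendsto L).comp hl).congr fun n => ?_
    simp only [Function.comp_apply, Real.exp_sum, poch]
    refine Finset.prod_congr rfl fun k _ => ?_
    rw [Real.exp_log (by linarith [powEven_lt_one h0 h1 k])]
    ring
  exact ⟨_, Real.exp_pos L, ht, fun n => (poch_anti h0 h1).le_of_tendsto ht n⟩

/-- Valid for every integer `n`: at `n = -1` the last factor vanishes, which is what makes the
extension by `0` consistent. -/
lemma rpoch_rec {P : ℝ} (h0 : 0 < P) (h1 : P < 1) (n : ℤ) :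
    rpoch P n = rpoch P (n + 1) * (1 - P ^ (2 * (n + 1))) := by
  unfold rpoch
  rcases lt_trichotomy n (-1) with h | h | h
  · rw [if_pos (by omega), if_pos (by omega)]; ring
  · subst h; norm_num
  · rw [if_neg (by omega), if_neg (by omega)]
    lift n to ℕ using (by omega)
    have e1 : ((n : ℤ) + 1).toNat = n + 1 := by omega
    have e2 : P ^ (2 * ((n : ℤ) + 1)) = P ^ (2 * (n + 1)) := by
      rw [← zpow_natCast]; push_cast; rfl
    rw [e1, e2, Int.toNat_natCast, poch_succ]
    have := (poch_pos h0 h1 n).ne'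
    have h3 : 1 - P ^ (2 * (n + 1)) ≠ 0 := by linarith [powEven_lt_one h0 h1 n]
    field_simp

/-- The recursion on coefficients induced by multiplying with the next factor of `jfac`. -/
lemma jcoef_rec {P : ℝ} (h0 : 0 < P) (h1 : P < 1) (N : ℕ) (j : ℤ) :
    jcoef P (N + 1) j = (1 + P ^ (4 * (N + 1))) * jcoef P N j
      + P ^ (2 * (N + 1)) * (jcoef P N (j - 1) + jcoef P N (j + 1)) := by
  unfold jcoef
  have hP := h0.ne'
  have r1 := rpoch_rec h0 h1 (N - j)
  have r2 := rpoch_rec h0 h1 (N - (j + 1))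
  have r3 := rpoch_rec h0 h1 (N + 1 + j)
  have r4 := rpoch_rec h0 h1 (N + 1 + (j - 1))
  have c1 : ((N + 1 : ℕ) : ℤ) - j = N - j + 1 := by push_cast; ring
  have c2 : ((N + 1 : ℕ) : ℤ) + 1 + j = N + 1 + j + 1 := by push_cast; ring
  have c3 : (N : ℤ) - (j - 1) = N - j + 1 := by ring
  have c4 : (N : ℤ) + 1 + (j + 1) = N + 1 + j + 1 := by ring
  have c5 : (N : ℤ) - (j + 1) + 1 = N - j := by ring
  have c6 : (N : ℤ) + 1 + (j - 1) + 1 = N + 1 + j := by ring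
  rw [c5] at r2
  rw [c6] at r4
  rw [c1, c2, c3, c4, r4, r2, r3, r1]
  set ρ := rpoch P (N - j + 1)
  set τ := rpoch P (N + 1 + j + 1)
  rw [show 2 * (N + 1) + 1 = 2 * N + 1 + 1 + 1 by ring, poch_succ, poch_succ]
  set D := poch P (2 * N + 1)
  have z1 : P ^ (2 * ((N : ℤ) - j + 1)) = P ^ (2 * (N : ℤ)) * (P ^ (2 * j))⁻¹ * P ^ 2 := by
    rw [show 2 * ((N : ℤ) - j + 1) = 2 * N + (- (2 * j)) + 2 by ring, zpow_add₀ hP, zpow_add₀ hP, zpow_neg]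
    norm_cast
  have z2 : P ^ (2 * ((N : ℤ) - j)) = P ^ (2 * (N : ℤ)) * (P ^ (2 * j))⁻¹ := by
    rw [show 2 * ((N : ℤ) - j) = 2 * N + (- (2 * j)) by ring, zpow_add₀ hP, zpow_neg]
  have z3 : P ^ (2 * ((N : ℤ) + 1 + j + 1)) = P ^ (2 * (N : ℤ)) * P ^ (2 * j) * P ^ 4 := by
    rw [show 2 * ((N : ℤ) + 1 + j + 1) = 2 * N + 2 * j + 4 by ring, zpow_add₀ hP, zpow_add₀ hP]
    norm_cast
  have z4 : P ^ (2 * ((N : ℤ) + 1 + j)) = P ^ (2 * (N : ℤ)) * P ^ (2 * j) * P ^ 2 := by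
    rw [show 2 * ((N : ℤ) + 1 + j) = 2 * N + 2 * j + 2 by ring, zpow_add₀ hP, zpow_add₀ hP]
    norm_cast
  have z5 : P ^ ((j - 1) * (j - 1 + 1)) = P ^ (j * (j + 1)) * (P ^ (2 * j))⁻¹ := by
    rw [show (j - 1) * (j - 1 + 1) = j * (j + 1) + (- (2 * j)) by ring, zpow_add₀ hP, zpow_neg]
  have z6 : P ^ ((j + 1) * (j + 1 + 1)) = P ^ (j * (j + 1)) * P ^ (2 * j) * P ^ 2 := by
    rw [show (j + 1) * (j + 1 + 1) = j * (j + 1) + 2 * j + 2 by ring, zpow_add₀ hP, zpow_add₀ hP]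
    norm_cast
  have z7 : P ^ (2 * (N : ℤ)) = (P ^ N) ^ 2 := by
    rw [← zpow_natCast, ← zpow_natCast, ← zpow_mul]; push_cast; ring_nf
  have hb : P ^ (2 * j) ≠ 0 := zpow_ne_zero _ hP
  rw [z1, z2, z3, z4, z5, z6, z7]
  set A := P ^ N with hA
  set B := P ^ (2 * j)
  rw [show P ^ (2 * (2 * N + 1 + 1)) = A ^ 4 * P ^ 4 by rw [hA]; ring,
    show P ^ (2 * (2 * N + 1 + 1 + 1)) = A ^ 4 * P ^ 6 by rw [hA]; ring,
    show P ^ (4 * (N + 1)) = A ^ 4 * P ^ 4 by rw [hA]; ring,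
    show P ^ (2 * (N + 1)) = A ^ 2 * P ^ 2 by rw [hA]; ring]
  field_simp
  ring

lemma jcoef_support (P : ℝ) (N : ℕ) (j : ℤ) (hj : j ∉ Finset.Icc (-(N : ℤ) - 1) N) :
    jcoef P N j = 0 := by
  simp only [Finset.mem_Icc, not_and_or, not_le] at hj
  unfold jcoef rpoch
  rcases hj with h | h
  · rw [if_pos (c := (N : ℤ) + 1 + j < 0) (by omega)]; ring
  · rw [if_pos (c := (N : ℤ) - j < 0) (by omega)]; ring

lemma jcoef_summable (P : ℝ) (N : ℕ) (i : ℤ) (g : ℤ → ℝ) :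
    Summable (fun j => jcoef P N (j + i) * g j) := by
  refine summable_of_ne_finset_zero (s := Finset.Icc (-(N : ℤ) - 1 - i) (N - i)) fun j hj => ?_
  rw [jcoef_support P N (j + i), zero_mul]
  simp only [Finset.mem_Icc] at hj ⊢
  omega

/-- The finite Jacobi triple product identity, by induction on `N` from `jcoef_rec`. -/
lemma jtriple_finite {P : ℝ} (h0 : 0 < P) (h1 : P < 1) (N : ℕ) (z : ℝ) :
    2 * (Real.cos z * jfac P N z) = ∑' j : ℤ, jcoef P N j * Real.cos ((2 * j + 1) * z) := by
  induction N with
  | zero =>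
    rw [tsum_eq_sum (s := Finset.Icc (-1 : ℤ) 0)
      (fun j hj => by rw [jcoef_support P 0 j (by simpa using hj), zero_mul])]
    rw [show Finset.Icc (-1 : ℤ) 0 = {-1, 0} by rfl, Finset.sum_insert (by simp), Finset.sum_singleton]
    have e1 := (poch_pos h0 h1 1).ne'
    have e2 : poch P 0 = 1 := by simp [poch]
    simp only [jcoef, jfac, rpoch]
    norm_num [e2, e1]
    ring
  | succ N ih =>
    have s0 := jcoef_summable P N 0 (fun j => Real.cos ((2 * j + 1) * z))
    have s1 := jcoef_summable P N (-1) (fun j => Real.cos ((2 * j + 1) * z))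
    have s2 := jcoef_summable P N 1 (fun j => Real.cos ((2 * j + 1) * z))
    have t1 := jcoef_summable P N 0 (fun j => Real.cos ((2 * j + 3) * z))
    have t2 := jcoef_summable P N 0 (fun j => Real.cos ((2 * j - 1) * z))
    -- Shifting the index turns the two neighbouring coefficients into frequencies `2j + 3` and
    -- `2j - 1`, which recombine into `2 cos 2z cos((2j+1)z)`.
    have sh1 : ∑' j : ℤ, jcoef P N (j + -1) * Real.cos ((2 * j + 1) * z)
        = ∑' j : ℤ, jcoef P N (j + 0) * Real.cos ((2 * j + 3) * z) := by
      rw [← (Equiv.addRight (1 : ℤ)).tsum_eq]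
      refine tsum_congr fun j => ?_
      simp only [Equiv.coe_addRight]
      push_cast
      rw [show j + 1 + -1 = j + 0 by ring, show (2 * ((j : ℝ) + 1) + 1) = 2 * j + 3 by ring]
    have sh2 : ∑' j : ℤ, jcoef P N (j + 1) * Real.cos ((2 * j + 1) * z)
        = ∑' j : ℤ, jcoef P N (j + 0) * Real.cos ((2 * j - 1) * z) := by
      rw [← (Equiv.addRight (-1 : ℤ)).tsum_eq]
      refine tsum_congr fun j => ?_
      simp only [Equiv.coe_addRight]
      push_cast
      rw [show j + -1 + 1 = j + 0 by ring, show (2 * ((j : ℝ) + -1) + 1) = 2 * j - 1 by ring]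
    have step : ∑' j : ℤ, jcoef P (N + 1) j * Real.cos ((2 * j + 1) * z)
        = (1 + P ^ (4 * (N + 1))) * (∑' j : ℤ, jcoef P N (j + 0) * Real.cos ((2 * j + 1) * z))
          + P ^ (2 * (N + 1)) * ((∑' j : ℤ, jcoef P N (j + -1) * Real.cos ((2 * j + 1) * z))
          + ∑' j : ℤ, jcoef P N (j + 1) * Real.cos ((2 * j + 1) * z)) := by
      rw [← s1.tsum_add s2, ← tsum_mul_left, ← tsum_mul_left, ← (s0.mul_left _).tsum_add ((s1.add s2).mul_left _)]
      refine tsum_congr fun j => ?_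
      rw [jcoef_rec h0 h1, add_zero]
      ring_nf
    rw [step, sh1, sh2, ← t1.tsum_add t2]
    have comb : ∑' j : ℤ, (jcoef P N (j + 0) * Real.cos ((2 * j + 3) * z) + jcoef P N (j + 0) * Real.cos ((2 * j - 1) * z))
        = 2 * Real.cos (2 * z) * ∑' j : ℤ, jcoef P N (j + 0) * Real.cos ((2 * j + 1) * z) := by
      rw [← tsum_mul_left]
      refine tsum_congr fun j => ?_
      rw [show (2 * (j : ℝ) + 3) * z = (2 * j + 1) * z + 2 * z by ring,
        show (2 * (j : ℝ) - 1) * z = (2 * j + 1) * z - 2 * z by ring, Real.cos_add, Real.cos_sub]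
      ring
    rw [comb]
    simp only [add_zero]
    rw [← ih, jfac, Finset.prod_range_succ, ← jfac]
    ring

/-! ### Theta series and their monotonicity -/

/-- The theta series `∑ P^{n(n+1)} cos((2n+1)z)`. -/
noncomputable def thetaC (P z : ℝ) : ℝ := ∑' n : ℕ, P ^ (n * (n + 1)) * Real.cos ((2 * n + 1) * z)

lemma rpoch_tendsto {P e : ℝ} (he : 0 < e) (ht : Tendsto (poch P) atTop (𝓝 e)) (f : ℕ → ℤ)
    (hf : Tendsto f atTop atTop) : Tendsto (fun N => rpoch P (f N)) atTop (𝓝 e⁻¹) := by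
  have h1 : Tendsto (fun N => (poch P (f N).toNat)⁻¹) atTop (𝓝 e⁻¹) := by
    refine (ht.inv₀ he.ne').comp ?_
    rw [tendsto_atTop] at hf ⊢
    intro b
    filter_upwards [hf b] with N hN
    omega
  refine h1.congr' ?_
  filter_upwards [hf.eventually_ge_atTop 0] with N hN
  rw [rpoch, if_neg (by omega)]

lemma rpoch_bound {P e : ℝ} (he : 0 < e) (hb : ∀ n, e ≤ poch P n) (n : ℤ) :
    0 ≤ rpoch P n ∧ rpoch P n ≤ e⁻¹ := by
  unfold rpoch
  split_ifs
  · exact ⟨le_rfl, by positivity⟩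
  · exact ⟨inv_nonneg.2 (he.le.trans (hb _)), inv_anti₀ he (hb _)⟩

lemma summable_thetaCoef {P : ℝ} (h0 : 0 < P) (h1 : P < 1) :
    Summable (fun n : ℕ => P ^ (n * (n + 1))) :=
  Summable.of_nonneg_of_le (fun n => by positivity)
    (fun n => pow_le_pow_of_le_one h0.le h1.le (by nlinarith)) (summable_geometric_of_lt_one h0.le h1)

lemma zpow_natIdx (P : ℝ) (n : ℕ) : P ^ ((n : ℤ) * ((n : ℤ) + 1)) = P ^ (n * (n + 1)) := by
  rw [← zpow_natCast]; push_cast; rfl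

/-- The exponent `j(j+1)` is invariant under `j ↦ -j-1`, so a bilateral sum folds onto `ℕ`. -/
lemma zpow_negIdx (P : ℝ) (n : ℕ) : P ^ ((-((n : ℤ) + 1)) * (-((n : ℤ) + 1) + 1)) = P ^ (n * (n + 1)) := by
  rw [← zpow_natCast]; push_cast; congr 1; ring

lemma summable_zthetaCoef {P : ℝ} (h0 : 0 < P) (h1 : P < 1) :
    Summable (fun j : ℤ => P ^ (j * (j + 1))) := by
  refine Summable.of_nat_of_neg_add_one ?_ ?_
  · simpa only [zpow_natIdx] using summable_thetaCoef h0 h1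
  · simpa only [zpow_negIdx] using summable_thetaCoef h0 h1

/-- The limiting form of the Jacobi triple product. -/
lemma jtriple_tendsto {P e : ℝ} (h0 : 0 < P) (h1 : P < 1) (he : 0 < e)
    (ht : Tendsto (poch P) atTop (𝓝 e)) (hb : ∀ n, e ≤ poch P n) (z : ℝ) :
    Tendsto (fun N => Real.cos z * jfac P N z) atTop (𝓝 (e⁻¹ * thetaC P z)) := by
  have hlim : Tendsto (fun N => ∑' j : ℤ, jcoef P N j * Real.cos ((2 * j + 1) * z)) atTop
      (𝓝 (∑' j : ℤ, (P ^ (j * (j + 1)) * e * e⁻¹ * e⁻¹) * Real.cos ((2 * j + 1) * z))) := by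
    refine tendsto_tsum_of_dominated_convergence
      (bound := fun j : ℤ => P ^ (j * (j + 1)) * (e⁻¹ * e⁻¹)) ((summable_zthetaCoef h0 h1).mul_right _) ?_ ?_
    · intro j
      refine Tendsto.mul_const _ ?_
      unfold jcoef
      refine ((tendsto_const_nhds.mul (ht.comp ?_)).mul (rpoch_tendsto he ht _ ?_)).mul (rpoch_tendsto he ht _ ?_)
      · exact tendsto_atTop_mono (fun n => by simp only [id]; omega) tendsto_id
      · exact (tendsto_atTop_add_const_right atTop (-j) tendsto_natCast_atTop_atTop).congr fun n => by ring
      · exact (tendsto_atTop_add_const_right atTop (1 + j) tendsto_natCast_atTop_atTop).congr fun n => by ring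
    · refine Eventually.of_forall fun N j => ?_
      have b1 := rpoch_bound he hb (N - j)
      have b2 := rpoch_bound he hb (N + 1 + j)
      have b3 : poch P (2 * N + 1) ≤ 1 := by
        simpa [poch] using poch_anti h0 h1 (Nat.zero_le (2 * N + 1))
      have b4 := poch_pos h0 h1 (2 * N + 1)
      have hz : 0 < P ^ (j * (j + 1)) := zpow_pos h0 _
      have hc : 0 ≤ jcoef P N j := by
        unfold jcoef
        exact mul_nonneg (mul_nonneg (by positivity) b1.1) b2.1
      rw [norm_mul, Real.norm_eq_abs, Real.norm_eq_abs, abs_of_nonneg hc]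
      refine (mul_le_of_le_one_right hc (Real.abs_cos_le_one _)).trans ?_
      unfold jcoef
      rw [mul_assoc _ (rpoch P _)]
      refine mul_le_mul ?_ (mul_le_mul b1.2 b2.2 b2.1 (by positivity)) (mul_nonneg b1.1 b2.1) hz.le
      exact mul_le_of_le_one_right hz.le b3
  have hval : ∑' j : ℤ, (P ^ (j * (j + 1)) * e * e⁻¹ * e⁻¹) * Real.cos ((2 * j + 1) * z)
      = 2 * (e⁻¹ * thetaC P z) := by
    have hs : Summable (fun n : ℕ => P ^ (n * (n + 1)) * Real.cos ((2 * n + 1) * z)) :=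
      Summable.of_norm_bounded (summable_thetaCoef h0 h1) fun n => by
        rw [norm_mul, Real.norm_eq_abs, Real.norm_eq_abs, abs_of_nonneg (by positivity)]
        exact mul_le_of_le_one_right (by positivity) (Real.abs_cos_le_one _)
    have hH : HasSum (fun j : ℤ => P ^ (j * (j + 1)) * Real.cos ((2 * j + 1) * z))
        (thetaC P z + thetaC P z) := by
      refine HasSum.of_nat_of_neg_add_one ?_ ?_
      · simp only [zpow_natIdx, Int.cast_natCast]
        exact hs.hasSum
      · have e1 : ∀ n : ℕ, Real.cos ((2 * ((-((n : ℤ) + 1) : ℤ) : ℝ) + 1) * z)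
            = Real.cos ((2 * n + 1) * z) := fun n => by
          rw [← Real.cos_neg]; push_cast; congr 1; ring
        simp only [zpow_negIdx, e1]
        exact hs.hasSum
    rw [two_mul, ← mul_add, ← hH.tsum_eq, ← tsum_mul_left]
    refine tsum_congr fun j => ?_
    field_simp
  rw [hval] at hlim
  have h2 := hlim.const_mul (1 / 2)
  rw [show 1 / 2 * (2 * (e⁻¹ * thetaC P z)) = e⁻¹ * thetaC P z by ring] at h2
  refine h2.congr fun N => ?_
  rw [← jtriple_finite h0 h1]; ring

lemma cos_two_mul_anti {z₁ z₂ : ℝ} (h0 : 0 ≤ z₁) (h : z₁ ≤ z₂) (h2 : z₂ ≤ π / 2) :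
    Real.cos (2 * z₂) ≤ Real.cos (2 * z₁) :=
  Real.cos_le_cos_of_nonneg_of_le_pi (by linarith) (by linarith) (by linarith)

/-- On `[0, π/2]` the theta series decreases at least as fast as a positive multiple of `cos`: it is a
positive multiple of `cos z` times the limit of `jfac P N z`, whose factors are decreasing in `z` and at
least `(1 - P^{2(k+1)})²`. -/
lemma thetaC_anti {P : ℝ} (h0 : 0 < P) (h1 : P < 1) :
    ∃ δ > 0, ∀ z₁ z₂, 0 ≤ z₁ → z₁ ≤ z₂ → z₂ ≤ π / 2 →
      δ * (Real.cos z₁ - Real.cos z₂) ≤ thetaC P z₁ - thetaC P z₂ := by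
  obtain ⟨e, he, ht, hb⟩ := poch_lim h0 h1
  refine ⟨e * e ^ 2, by positivity, fun z₁ z₂ hz hle hz2 => ?_⟩
  have hc : Real.cos z₂ ≤ Real.cos z₁ :=
    Real.cos_le_cos_of_nonneg_of_le_pi (by linarith) (by linarith [Real.pi_pos]) (by linarith)
  have hc1 : 0 ≤ Real.cos z₁ := Real.cos_nonneg_of_mem_Icc ⟨by linarith [Real.pi_pos], by linarith⟩
  have hlow : ∀ k : ℕ, (1 - P ^ (2 * (k + 1))) ^ 2
      ≤ 1 + 2 * P ^ (2 * (k + 1)) * Real.cos (2 * z₂) + P ^ (4 * (k + 1)) := fun k => by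
    have := Real.neg_one_le_cos (2 * z₂)
    have hp : 0 < P ^ (2 * (k + 1)) := by positivity
    rw [show P ^ (4 * (k + 1)) = (P ^ (2 * (k + 1))) ^ 2 by ring]
    nlinarith
  have hfin : ∀ N, e ^ 2 * (Real.cos z₁ - Real.cos z₂)
      ≤ Real.cos z₁ * jfac P N z₁ - Real.cos z₂ * jfac P N z₂ := fun N => by
    have a1 : e ^ 2 ≤ jfac P N z₂ := by
      calc e ^ 2 ≤ poch P N ^ 2 := pow_le_pow_left₀ he.le (hb N) 2
        _ = ∏ k ∈ Finset.range N, (1 - P ^ (2 * (k + 1))) ^ 2 := by rw [poch, Finset.prod_pow]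
        _ ≤ _ := Finset.prod_le_prod (fun k _ => sq_nonneg _) fun k _ => hlow k
    have a2 : jfac P N z₂ ≤ jfac P N z₁ := by
      refine Finset.prod_le_prod (fun k _ => (sq_nonneg _).trans (hlow k)) fun k _ => ?_
      have := cos_two_mul_anti hz hle hz2
      have hp : 0 < P ^ (2 * (k + 1)) := by positivity
      nlinarith
    nlinarith
  have hl := ((jtriple_tendsto h0 h1 he ht hb z₁).sub (jtriple_tendsto h0 h1 he ht hb z₂))
  have := ge_of_tendsto' hl hfin
  rw [← mul_sub, inv_mul_eq_div, le_div_iff₀ he] at this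
  linarith

/-! ### The function W in logarithmic coordinates -/

/-- Coefficients of the `k`-th `θ`-derivative of `W`: `(8/π) m^k / ((m² - 1) m)`, `m = 4n + 2`. -/
noncomputable def cc : ℕ → ℕ → ℝ
  | 0 => fun n => 8 / π / ((mm n ^ 2 - 1) * mm n)
  | k + 1 => fun n => mm n * cc k n

lemma cc_zero_le (n : ℕ) : |cc 0 n| ≤ 1 := by
  have h := mm_ge n
  have hp := Real.pi_gt_three
  have h3 : 3 * 2 ≤ (mm n ^ 2 - 1) * mm n := mul_le_mul (by nlinarith) h (by norm_num) (by nlinarith)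
  have h4 : 8 / π ≤ 3 := by rw [div_le_iff₀ (by linarith)]; linarith
  have h5 : 0 < 8 / π := by positivity
  simp only [cc]
  rw [abs_of_nonneg (by positivity), div_le_one (by linarith)]
  linarith

lemma cc_PB : ∀ k, PB (cc k)
  | 0 => PB.of_le_one cc_zero_le
  | k + 1 => (cc_PB k).mul_mm

/-- `w(s,θ) = W(e^s, θ)`. -/
noncomputable def w (s θ : ℝ) : ℝ := K (cc 0) 0 s θ
/-- `∂w/∂s`. -/
noncomputable def ws (s θ : ℝ) : ℝ := K (cc 2) 0 s θ
/-- `∂w/∂θ`. -/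
noncomputable def wt (s θ : ℝ) : ℝ := K (cc 1) (π / 2) s θ
/-- `∂²w/∂s∂θ`. -/
noncomputable def wst (s θ : ℝ) : ℝ := K (cc 3) (π / 2) s θ
/-- `∂²w/∂s²`. -/
noncomputable def wss (s θ : ℝ) : ℝ := K (cc 4) 0 s θ

/-- The linear form `(a, b) : ℝ × ℝ → ℝ` acting by `(ds, dθ) ↦ a ds + b dθ`. -/
noncomputable def lf (a b : ℝ) : ℝ × ℝ →L[ℝ] ℝ :=
  a • ContinuousLinearMap.fst ℝ ℝ ℝ + b • ContinuousLinearMap.snd ℝ ℝ ℝ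

@[simp] lemma lf_apply (a b : ℝ) (p : ℝ × ℝ) : lf a b p = a * p.1 + b * p.2 := by
  simp [lf]

lemma w_fderiv {s : ℝ} (hs : s < 0) (θ : ℝ) :
    HasFDerivAt (fun p : ℝ × ℝ => w p.1 p.2) (lf (ws s θ) (wt s θ)) (s, θ) := by
  have := K_hasFDerivAt (cc_PB 0) 0 hs θ
  rw [zero_add] at this
  exact this

lemma ws_fderiv {s : ℝ} (hs : s < 0) (θ : ℝ) :
    HasFDerivAt (fun p : ℝ × ℝ => ws p.1 p.2) (lf (wss s θ) (wst s θ)) (s, θ) := by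
  have := K_hasFDerivAt (cc_PB 2) 0 hs θ
  rw [zero_add] at this
  exact this

/-- Here the heat equation `w_θθ = -w_s` enters. -/
lemma wt_fderiv {s : ℝ} (hs : s < 0) (θ : ℝ) :
    HasFDerivAt (fun p : ℝ × ℝ => wt p.1 p.2) (lf (wst s θ) (-ws s θ)) (s, θ) := by
  have := K_hasFDerivAt (cc_PB 1) (π / 2) hs θ
  rw [K_phase] at this
  exact this

lemma wst_deriv_t {s : ℝ} (hs : s < 0) (θ : ℝ) :
    HasDerivAt (fun θ => wst s θ) (-wss s θ) θ := by
  have := K_hasDerivAt_t (cc_PB 3) (π / 2) hs θ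
  rw [K_phase] at this
  exact this

lemma comp_s {f : ℝ → ℝ → ℝ} {a b s θ : ℝ} (h : HasFDerivAt (fun p : ℝ × ℝ => f p.1 p.2) (lf a b) (s, θ)) :
    HasDerivAt (fun s => f s θ) a s := by
  have := h.comp_hasDerivAt s ((hasDerivAt_id s).prodMk (hasDerivAt_const s θ))
  exact this.congr_deriv (by simp)

lemma comp_t {f : ℝ → ℝ → ℝ} {a b s θ : ℝ} (h : HasFDerivAt (fun p : ℝ × ℝ => f p.1 p.2) (lf a b) (s, θ)) :
    HasDerivAt (fun θ => f s θ) b θ := by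
  have := h.comp_hasDerivAt θ ((hasDerivAt_const θ s).prodMk (hasDerivAt_id θ))
  exact this.congr_deriv (by simp)

/-- The reflection `θ ↦ π/2 - θ` is a symmetry because every `m = 4n + 2` is twice an odd number. -/
lemma K_reflect_sin (c : ℕ → ℝ) (s θ : ℝ) : K c 0 s (π / 2 - θ) = K c 0 s θ := by
  unfold K
  refine tsum_congr fun n => ?_
  have : mm n * (π / 2 - θ) + 0 = (π - mm n * θ) + n * (2 * π) := by unfold mm; ring
  rw [this, Real.sin_add_nat_mul_two_pi, Real.sin_pi_sub, add_zero]

lemma K_reflect_cos (c : ℕ → ℝ) (s θ : ℝ) : K c (π / 2) s (π / 2 - θ) = -K c (π / 2) s θ := by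
  unfold K
  rw [← tsum_neg]
  refine tsum_congr fun n => ?_
  have : mm n * (π / 2 - θ) = (π - mm n * θ) + n * (2 * π) := by unfold mm; ring
  rw [this, Real.sin_add_pi_div_two, Real.sin_add_pi_div_two, Real.cos_add_nat_mul_two_pi, Real.cos_pi_sub]
  ring

lemma w_reflect (s θ : ℝ) : w s (π / 2 - θ) = w s θ := K_reflect_sin _ _ _
lemma ws_reflect (s θ : ℝ) : ws s (π / 2 - θ) = ws s θ := K_reflect_sin _ _ _
lemma wss_reflect (s θ : ℝ) : wss s (π / 2 - θ) = wss s θ := K_reflect_sin _ _ _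
lemma wt_reflect (s θ : ℝ) : wt s (π / 2 - θ) = -wt s θ := K_reflect_cos _ _ _
lemma wst_reflect (s θ : ℝ) : wst s (π / 2 - θ) = -wst s θ := K_reflect_cos _ _ _

/-- `w_{sθ} - w_θ` is a theta function in the nome `e^{16 s}`. -/
lemma Cc_eq_theta {s : ℝ} (hs : s < 0) (θ : ℝ) :
    wst s θ - wt s θ = 8 / π * Real.exp (4 * s) * thetaC (Real.exp (16 * s)) (2 * θ) := by
  unfold wst wt K thetaC
  rw [← (K_summable (cc_PB 3) _ hs θ).tsum_sub (K_summable (cc_PB 1) _ hs θ), ← tsum_mul_left]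
  refine tsum_congr fun n => ?_
  have h := mm_ge n
  have h1 : mm n ^ 2 - 1 ≠ 0 := by nlinarith
  have h2 : mm n ≠ 0 := by linarith
  have h3 : Real.exp (4 * s) * Real.exp (16 * s) ^ (n * (n + 1)) = Real.exp (mm n ^ 2 * s) := by
    rw [← Real.exp_nat_mul, ← Real.exp_add]; congr 1; unfold mm; push_cast; ring
  have h4 : cc 3 n - cc 1 n = 8 / π := by
    simp only [cc]; field_simp
  rw [Real.sin_add_pi_div_two, show (2 * (n : ℝ) + 1) * (2 * θ) = mm n * θ by unfold mm; ring]
  linear_combination Real.exp (mm n ^ 2 * s) * Real.cos (mm n * θ) * h4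
    - 8 / π * Real.cos (mm n * θ) * h3

lemma Cc_deriv {s : ℝ} (hs : s < 0) (θ : ℝ) :
    HasDerivAt (fun θ => wst s θ - wt s θ) (-(wss s θ - ws s θ)) θ :=
  ((wst_deriv_t hs θ).sub (comp_t (wt_fderiv hs θ))).congr_deriv (by ring)

/-- `w_ss - w_s` is minus the `θ`-derivative of the theta function `w_sθ - w_θ` (heat equation), so
`thetaC_anti` bounds it below by a positive multiple of `sin 2θ`. -/
lemma Mm_pos {s : ℝ} (hs : s < 0) {θ : ℝ} (hθ : 0 < θ) (hθ' : θ < π / 2) : 0 < wss s θ - ws s θ := by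
  -- The theta function has argument `2θ`, and `thetaC_anti` covers arguments in `[0, π/2]`.
  wlog hle : θ ≤ π / 4 generalizing θ
  · have := this (θ := π / 2 - θ) (by linarith) (by linarith) (by push Not at hle; linarith)
    rwa [wss_reflect, ws_reflect] at this
  have hP1 : Real.exp (16 * s) < 1 := Real.exp_lt_one_iff.2 (by linarith)
  obtain ⟨δ, hδ, H⟩ := thetaC_anti (Real.exp_pos (16 * s)) hP1
  set δ' := 8 / π * Real.exp (4 * s) * δ with hδ'
  have hδ'pos : 0 < δ' := by positivity
  have hanti : AntitoneOn (fun t => (wst s t - wt s t) - δ' * Real.cos (2 * t)) (Icc 0 (π / 4)) := by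
    intro a ha b hb hab
    have h := H (2 * a) (2 * b) (by linarith [ha.1]) (by linarith) (by linarith [hb.2])
    simp only [Cc_eq_theta hs, hδ']
    have hq : 0 < 8 / π * Real.exp (4 * s) := by positivity
    nlinarith [mul_le_mul_of_nonneg_left h hq.le]
  have hd : HasDerivAt (fun t => (wst s t - wt s t) - δ' * Real.cos (2 * t))
      (-(wss s θ - ws s θ) + 2 * δ' * Real.sin (2 * θ)) θ := by
    have h1 := ((((hasDerivAt_id θ).const_mul 2).cos).const_mul δ')
    refine ((Cc_deriv hs θ).sub h1).congr_deriv ?_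
    simp only [id]; ring
  have h2 := hanti.derivWithin_nonpos (x := θ)
  rw [hd.hasDerivWithinAt.derivWithin (uniqueDiffOn_Icc (by linarith [Real.pi_pos]) θ ⟨hθ.le, hle⟩)] at h2
  have h3 : 0 < Real.sin (2 * θ) := Real.sin_pos_of_pos_of_lt_pi (by linarith) (by linarith)
  nlinarith [mul_pos hδ'pos h3]

lemma Cc_strictAnti {s : ℝ} (hs : s < 0) : StrictAntiOn (fun θ => wst s θ - wt s θ) (Icc 0 (π / 2)) := by
  refine strictAntiOn_of_deriv_neg (convex_Icc _ _) (fun t _ => (Cc_deriv hs t).continuousAt.continuousWithinAt) ?_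
  intro t ht
  rw [interior_Icc] at ht
  rw [(Cc_deriv hs t).deriv]
  linarith [Mm_pos hs ht.1 ht.2]

lemma wt_mid (s : ℝ) : wt s (π / 4) = 0 := by
  have := wt_reflect s (π / 4)
  rw [show π / 2 - π / 4 = π / 4 by ring] at this
  linarith

lemma wst_mid (s : ℝ) : wst s (π / 4) = 0 := by
  have := wst_reflect s (π / 4)
  rw [show π / 2 - π / 4 = π / 4 by ring] at this
  linarith

lemma Cc_pos {s : ℝ} (hs : s < 0) {θ : ℝ} (hθ : 0 ≤ θ) (hθ' : θ < π / 4) : 0 < wst s θ - wt s θ := by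
  have hp := Real.pi_pos
  have := Cc_strictAnti hs ⟨hθ, by linarith⟩ ⟨by linarith, by linarith⟩ hθ'
  simp only [wt_mid, wst_mid] at this
  linarith

lemma Cc_ne {s : ℝ} (hs : s < 0) {θ : ℝ} (hθ : 0 < θ) (hθ' : θ < π / 2) (h : θ ≠ π / 4) :
    wst s θ - wt s θ ≠ 0 := by
  rcases lt_or_gt_of_ne h with h | h
  · exact (Cc_pos hs hθ.le h).ne'
  · have := Cc_pos hs (θ := π / 2 - θ) (by linarith) (by linarith)
    rw [wst_reflect, wt_reflect] at this
    intro h'; linarith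

/-! ### Boundary behaviour at r = 1 -/

lemma cc_one_eq (n : ℕ) : cc 1 n = 8 / π / (mm n ^ 2 - 1) := by
  have h := mm_ge n
  have h1 : mm n ^ 2 - 1 ≠ 0 := by nlinarith
  have h2 : mm n ≠ 0 := by linarith
  simp only [cc]; field_simp

lemma mm_sq_ge (n : ℕ) : 3 * ((n : ℝ) + 1) ^ 2 ≤ mm n ^ 2 - 1 := by
  have : (0:ℝ) ≤ n := n.cast_nonneg
  unfold mm; nlinarith

lemma summable_inv_sq : Summable (fun n : ℕ => 8 / π / (3 * ((n : ℝ) + 1) ^ 2)) := by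
  have h := ((summable_nat_add_iff 1).2 (Real.summable_one_div_nat_pow.2 one_lt_two)).mul_left (8 / π / 3)
  refine h.congr fun n => ?_
  push_cast; field_simp

lemma cc_one_summable : Summable (fun n => |cc 1 n|) := by
  refine Summable.of_nonneg_of_le (fun n => abs_nonneg _) (fun n => ?_) summable_inv_sq
  have h := mm_sq_ge n
  have h0 : 0 < 3 * ((n : ℝ) + 1) ^ 2 := by positivity
  rw [cc_one_eq, abs_of_nonneg (div_nonneg (by positivity) (by linarith))]
  exact div_le_div_of_nonneg_left (by positivity) h0 h

lemma cc_zero_summable : Summable (fun n => |cc 0 n|) := by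
  refine Summable.of_nonneg_of_le (fun n => abs_nonneg _) (fun n => ?_) cc_one_summable
  change _ ≤ |mm n * cc 0 n|
  rw [abs_mul, abs_of_pos (mm_pos n)]
  nlinarith [mm_ge n, abs_nonneg (cc 0 n)]

lemma bernoulli2_eval (x : ℝ) :
    (Polynomial.map (algebraMap ℚ ℝ) (Polynomial.bernoulli 2)).eval x = x ^ 2 - x + 1 / 6 := by
  simp [Polynomial.bernoulli, Finset.sum_range_succ, bernoulli_one, bernoulli_two]
  ring

/-- `∑ (8/π) m⁻² cos(m θ) = π/4 - θ` on `[0, π/2]`: the odd part of the Fourier series of the second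
Bernoulli polynomial. -/
lemma fourier_linear {θ : ℝ} (h0 : 0 ≤ θ) (h1 : θ ≤ π / 2) :
    K (fun n => 8 / π / mm n ^ 2) (π / 2) 0 θ = π / 4 - θ := by
  have hp := Real.pi_pos
  have e : ∀ x ∈ Icc (0:ℝ) 1, HasSum (fun n : ℕ => 1 / (n : ℝ) ^ 2 * Real.cos (2 * π * n * x))
      (π ^ 2 * (x ^ 2 - x + 1 / 6)) := fun x hx => by
    have := hasSum_one_div_nat_pow_mul_cos one_ne_zero hx
    simp only [mul_one, bernoulli2_eval] at this
    convert! this using 1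
    rw [show Nat.factorial 2 = 2 from rfl]; push_cast; ring
  have hx : θ / π ≤ 1 / 2 := by rw [div_le_iff₀ hp]; linarith
  have hx0 : 0 ≤ θ / π := by positivity
  have e1 := e (θ / π) ⟨hx0, by linarith⟩
  have e2 := e (2 * (θ / π)) ⟨by linarith, by linarith⟩
  set f : ℕ → ℝ := fun n : ℕ => 1 / (n : ℝ) ^ 2 * Real.cos (2 * π * n * (θ / π)) with hf
  have he : HasSum (fun k => f (2 * k)) (1 / 4 * (π ^ 2 * ((2 * (θ / π)) ^ 2 - 2 * (θ / π) + 1 / 6))) := by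
    have := e2.mul_left (1 / 4)
    convert! this using 1
    funext k
    simp only [hf]
    rw [show 2 * π * ((2 * k : ℕ) : ℝ) * (θ / π) = 2 * π * k * (2 * (θ / π)) by push_cast; ring]
    push_cast
    ring
  have ho : Summable (fun k => f (2 * k + 1)) :=
    e1.summable.comp_injective (i := fun k : ℕ => 2 * k + 1) fun a b h => by simpa using h
  -- The frequencies `m` are the odd ones doubled: subtract the even-index terms, which form the same
  -- series at `2θ` divided by `4`.
  have heq := (he.even_add_odd ho.hasSum).unique e1
  have hK : K (fun n => 8 / π / mm n ^ 2) (π / 2) 0 θ = 2 / π * ∑' k, f (2 * k + 1) := by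
    unfold K
    rw [← tsum_mul_left]
    refine tsum_congr fun n => ?_
    have hm : mm n ^ 2 = 4 * (2 * (n : ℝ) + 1) ^ 2 := by unfold mm; ring
    have hm' : 2 * π * ((2 * n + 1 : ℕ) : ℝ) * (θ / π) = mm n * θ := by
      unfold mm; push_cast; field_simp; ring
    have : (2 * (n:ℝ) + 1) ≠ 0 := by positivity
    simp only [hf]
    rw [hm', Real.sin_add_pi_div_two, hm, mul_zero, Real.exp_zero]
    push_cast
    field_simp; ring
  rw [hK]
  have : ∑' k, f (2 * k + 1) = π / 2 * (π / 4 - θ) := by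
    have : ∑' k, f (2 * k + 1) = π ^ 2 * ((θ / π) ^ 2 - θ / π + 1 / 6)
      - 1 / 4 * (π ^ 2 * ((2 * (θ / π)) ^ 2 - 2 * (θ / π) + 1 / 6)) := by linarith
    rw [this]; field_simp; ring
  rw [this]; field_simp

lemma const_of_deriv_zero {f : ℝ → ℝ} {b : ℝ}
    (h : ∀ x ∈ Icc 0 b, HasDerivAt f 0 x) : ∀ x ∈ Icc 0 b, f x = f 0 :=
  constant_of_has_deriv_right_zero (fun x hx => (h x hx).continuousAt.continuousWithinAt)
    fun x hx => (h x ⟨hx.1, hx.2.le⟩).hasDerivWithinAt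

/-- The boundary values of `w_θ` at `s = 0`. By `fourier_linear` they differ from `π/4 - θ` by a
function whose second derivative is `-w_θ(0,·)`, so they solve `v'' = -v`. -/
lemma wt_zero {θ : ℝ} (h0 : 0 ≤ θ) (h1 : θ ≤ π / 2) : wt 0 θ = Real.cos θ - Real.sin θ := by
  have hp := Real.pi_pos
  set a4 : ℕ → ℝ := fun n => 8 / π / ((mm n ^ 2 - 1) * mm n ^ 2) with ha4
  have hma4 : (fun n => mm n * a4 n) = cc 0 := by
    funext n
    have h := mm_ge n
    have h1 : mm n ^ 2 - 1 ≠ 0 := by nlinarith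
    have h2 : mm n ≠ 0 := by linarith
    simp only [ha4, cc]; field_simp
  have hsa4 : Summable (fun n => |a4 n|) := by
    refine Summable.of_nonneg_of_le (fun n => abs_nonneg _) (fun n => ?_) cc_zero_summable
    rw [← hma4]
    simp only
    rw [abs_mul, abs_of_pos (mm_pos n)]
    nlinarith [mm_ge n, abs_nonneg (a4 n)]
  have hsum : ∀ {c : ℕ → ℝ}, Summable (fun n => |c n|) → ∀ t,
      Summable (fun n => c n * (Real.exp (mm n ^ 2 * 0) * Real.sin (mm n * t + π / 2))) := fun {c} hc t =>
    Summable.of_norm_bounded hc fun n => by simpa using term_bound c (π / 2) 0 0 t le_rfl n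
  have ha2 : Summable (fun n => |8 / π / mm n ^ 2|) := by
    refine Summable.of_nonneg_of_le (fun n => abs_nonneg _) (fun n => ?_) cc_one_summable
    have h := mm_sq_ge n
    have h0 : 0 < 3 * ((n : ℝ) + 1) ^ 2 := by positivity
    rw [cc_one_eq, abs_of_nonneg (by positivity), abs_of_nonneg (div_nonneg (by positivity) (by linarith))]
    exact div_le_div_of_nonneg_left (by positivity) (by linarith) (by linarith)
  have hsplit : ∀ t, 0 ≤ t → t ≤ π / 2 → wt 0 t = K a4 (π / 2) 0 t + (π / 4 - t) := fun t ht0 ht1 => by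
    rw [← fourier_linear ht0 ht1]
    unfold wt K
    rw [← (hsum hsa4 t).tsum_add (hsum ha2 t)]
    refine tsum_congr fun n => ?_
    have h := mm_ge n
    have h1 : mm n ^ 2 - 1 ≠ 0 := by nlinarith
    have h2 : mm n ≠ 0 := by linarith
    have : cc 1 n = a4 n + 8 / π / mm n ^ 2 := by
      rw [cc_one_eq]; simp only [ha4]; field_simp; ring
    rw [this]; ring
  have dh : ∀ t, HasDerivAt (fun t => K a4 (π / 2) 0 t) (-w 0 t) t := fun t => by
    have := K_hasDerivAt_t' hsa4 (by simpa only [← hma4] using cc_zero_summable) (π / 2) le_rfl t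
    rw [K_phase, hma4] at this
    exact this
  have dw : ∀ t, HasDerivAt (fun t => w 0 t) (wt 0 t) t := fun t => by
    have := K_hasDerivAt_t' cc_zero_summable cc_one_summable 0 le_rfl t
    rw [zero_add] at this
    exact this
  -- `k` is the discrepancy and `j` its derivative; `j' = -k` on the interval, so `k` is a combination of
  -- `cos` and `sin`, pinned down by `j 0 = 0` and `k (π/4) = 0`.
  set k : ℝ → ℝ := fun t => K a4 (π / 2) 0 t + (π / 4 - t) - (Real.cos t - Real.sin t) with hk
  set j : ℝ → ℝ := fun t => -1 - w 0 t + Real.sin t + Real.cos t with hj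
  have dk : ∀ t, HasDerivAt k (j t) t := fun t => by
    refine (((dh t).add ((hasDerivAt_id t).const_sub (π / 4))).sub
      ((Real.hasDerivAt_cos t).sub (Real.hasDerivAt_sin t))).congr_deriv ?_
    simp only [hj]; ring
  have dj : ∀ t ∈ Icc 0 (π / 2), HasDerivAt j (-k t) t := fun t ht => by
    refine ((((dw t).const_sub (-1)).add (Real.hasDerivAt_sin t)).add (Real.hasDerivAt_cos t)).congr_deriv ?_
    rw [hsplit t ht.1 ht.2]; simp only [hk]; ring
  have hA := const_of_deriv_zero (f := fun t => j t * Real.cos t + k t * Real.sin t) (b := π / 2) fun t ht =>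
    (((dj t ht).mul (Real.hasDerivAt_cos t)).add ((dk t).mul (Real.hasDerivAt_sin t))).congr_deriv (by ring)
  have hB := const_of_deriv_zero (f := fun t => k t * Real.cos t - j t * Real.sin t) (b := π / 2) fun t ht =>
    (((dk t).mul (Real.hasDerivAt_cos t)).sub ((dj t ht).mul (Real.hasDerivAt_sin t))).congr_deriv (by ring)
  have hj0 : j 0 = 0 := by
    simp [hj, w, K]
  have hm : π / 4 ∈ Icc 0 (π / 2) := ⟨by linarith, by linarith⟩
  have hk4 : k (π / 4) = 0 := by
    simp only [hk]
    rw [← hsplit _ hm.1 hm.2, wt_mid, Real.cos_pi_div_four, Real.sin_pi_div_four]; ring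
  have hA' := fun t ht => hA t ht
  simp only [hj0, Real.sin_zero, mul_zero, add_zero, sub_zero, Real.cos_zero, mul_one] at hA' hB
  have hkt : ∀ t ∈ Icc 0 (π / 2), k t = k 0 * Real.cos t := fun t ht => by
    have a := hA' t ht
    have b := hB t ht
    linear_combination Real.sin t * a + Real.cos t * b - k t * Real.sin_sq_add_cos_sq t
  have hk0 : k 0 = 0 := by
    have := hkt _ hm
    rw [hk4, Real.cos_pi_div_four] at this
    have h2 : (√2 / 2 : ℝ) ≠ 0 := by positivity
    rcases mul_eq_zero.1 this.symm with h | h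
    · exact h
    · exact absurd h h2
  have := hkt θ ⟨h0, h1⟩
  rw [hk0, zero_mul] at this
  rw [hsplit θ h0 h1]
  simp only [hk] at this
  linarith

lemma wt_continuousOn : ContinuousOn (fun p : ℝ × ℝ => wt p.1 p.2) (Iic 0 ×ˢ univ) :=
  K_continuousOn cc_one_summable _

lemma w_continuousOn : ContinuousOn (fun p : ℝ × ℝ => w p.1 p.2) (Iic 0 ×ˢ univ) :=
  K_continuousOn cc_zero_summable _

lemma wt_tendsto (θ : ℝ) : Tendsto (fun s => wt s θ) (𝓝[<] 0) (𝓝 (wt 0 θ)) := by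
  have h : ContinuousWithinAt (fun s => wt s θ) (Iio 0) 0 :=
    (wt_continuousOn (0, θ) ⟨by simp, mem_univ _⟩).comp (f := fun s : ℝ => (s, θ))
      (by fun_prop) fun s hs => ⟨le_of_lt (mem_Iio.1 hs), mem_univ _⟩
  exact h

/-- The heat equation gives `w_s = -∂_θ w_θ`, and `w_θ` tends to `cos θ - sin θ`. The mean value theorem on a
short interval `[a, θ]` bounds `w_s(s, ξ)` below at some `ξ < θ`, and the monotonicity in `θ` of `w_s - w`
transfers the bound to `θ`. -/
lemma ws_liminf_aux {θ κ : ℝ} (h0 : 0 < θ) (h1 : θ ≤ π / 4) (hκ : κ < Real.cos θ + Real.sin θ) :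
    ∀ᶠ s in 𝓝[<] 0, κ < ws s θ := by
  have hp := Real.pi_pos
  obtain ⟨ε, hε, hε'⟩ : ∃ ε > 0, κ + 2 * ε < Real.cos θ + Real.sin θ :=
    ⟨(Real.cos θ + Real.sin θ - κ) / 3, by linarith, by linarith⟩
  obtain ⟨η, hη, hw⟩ := Metric.continuousWithinAt_iff.1 (w_continuousOn (0, θ) ⟨by simp, mem_univ _⟩)
    (ε / 2) (by linarith)
  have hd : HasDerivAt (fun t => Real.cos t - Real.sin t) (-Real.sin θ - Real.cos θ) θ :=
    (Real.hasDerivAt_cos θ).sub (Real.hasDerivAt_sin θ)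
  have hsl := hasDerivAt_iff_tendsto_slope.1 hd
  have hsl' := (hsl.mono_left (nhdsWithin_mono θ (s := Iio θ) fun t ht => ne_of_lt ht)).eventually_lt_const
    (show -Real.sin θ - Real.cos θ < -(κ + 2 * ε) by linarith)
  have hnear : ∀ᶠ a in 𝓝[<] θ, a ∈ Ioo (max 0 (θ - η)) θ :=
    Ioo_mem_nhdsLT (max_lt h0 (by linarith))
  obtain ⟨a, ha, haI⟩ := (hsl'.and hnear).exists
  have ha0 : 0 < a := (le_max_left _ _).trans_lt haI.1
  have haη : θ - η < a := (le_max_right _ _).trans_lt haI.1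
  have haθ := haI.2
  rw [slope_def_field, ← wt_zero ha0.le (by linarith), ← wt_zero h0.le (by linarith),
    div_lt_iff_of_neg (by linarith)] at ha
  have hlim : Tendsto (fun s => wt s a - wt s θ) (𝓝[<] 0) (𝓝 (wt 0 a - wt 0 θ)) :=
    (wt_tendsto a).sub (wt_tendsto θ)
  filter_upwards [hlim.eventually_const_lt ha, Ioo_mem_nhdsLT (show -η < 0 by linarith)] with s hs hsI
  have hs0 : s < 0 := hsI.2
  obtain ⟨ξ, hξ, hξe⟩ := exists_hasDerivAt_eq_slope (fun t => wt s t) (fun t => -ws s t) haθ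
    (fun t _ => (comp_t (wt_fderiv hs0 t)).continuousAt.continuousWithinAt)
    (fun t _ => comp_t (wt_fderiv hs0 t))
  rw [eq_div_iff (by linarith)] at hξe
  have h2 : κ + 2 * ε < ws s ξ := by
    have : 0 < θ - a := by linarith
    by_contra hcon
    push Not at hcon
    nlinarith
  -- The `θ`-derivative of `w_s - w` is the theta function `w_sθ - w_θ`, positive on `[0, π/4)`.
  have hmono : MonotoneOn (fun t => ws s t - w s t) (Icc 0 (π / 4)) := by
    have hd : ∀ t, HasDerivAt (fun t => ws s t - w s t) (wst s t - wt s t) t := fun t =>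
      (comp_t (ws_fderiv hs0 t)).sub (comp_t (w_fderiv hs0 t))
    refine monotoneOn_of_deriv_nonneg (convex_Icc _ _)
      (fun t _ => (hd t).continuousAt.continuousWithinAt)
      (fun t _ => (hd t).differentiableAt.differentiableWithinAt) fun t ht => ?_
    rw [interior_Icc] at ht
    rw [(hd t).deriv]
    exact (Cc_pos hs0 ht.1.le ht.2).le
  have h3 := hmono ⟨by linarith [hξ.1], by linarith [hξ.2]⟩ ⟨h0.le, h1⟩ hξ.2.le
  simp only at h3
  have hin : ∀ t, a < t → t ≤ θ → |w s t - w 0 θ| < ε / 2 := fun t ht ht' => by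
    have := hw (x := (s, t)) ⟨hs0.le, mem_univ _⟩ (by
      rw [Prod.dist_eq, Real.dist_eq, Real.dist_eq]
      refine max_lt ?_ ?_
      · rw [sub_zero, abs_lt]; constructor <;> linarith [hsI.1]
      · rw [abs_lt]; constructor <;> linarith)
    simpa [Real.dist_eq] using this
  have h4 := abs_lt.1 (hin ξ hξ.1 hξ.2.le)
  have h5 := abs_lt.1 (hin θ haθ le_rfl)
  linarith [h4.1, h4.2, h5.1, h5.2]

/-- Lower bound for `w_s` at the boundary `s = 0` (where its series does not converge absolutely). -/
lemma ws_liminf {θ κ : ℝ} (h0 : 0 < θ) (h1 : θ < π / 2) (hκ : κ < Real.cos θ + Real.sin θ) :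
    ∀ᶠ s in 𝓝[<] 0, κ < ws s θ := by
  rcases le_total θ (π / 4) with h | h
  · exact ws_liminf_aux h0 h hκ
  · have := ws_liminf_aux (θ := π / 2 - θ) (κ := κ) (by linarith) (by linarith)
      (by rw [Real.cos_pi_div_two_sub, Real.sin_pi_div_two_sub]; linarith)
    simpa only [ws_reflect] using this

/-! ### The inner maximum -/

/-- `F(s,θ) = e^s (x cos θ + y sin θ) - W(e^s, θ)`, the function whose minimax value is `u(x,y)`. -/
noncomputable def FF (x y s θ : ℝ) : ℝ := Real.exp s * (x * Real.cos θ + y * Real.sin θ) - w s θ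

/-- The inner maximum over `r`. -/
noncomputable def GG (x y θ : ℝ) : ℝ :=
  ⨆ r : Icc (0 : ℝ) 1, ((r : ℝ) * (x * Real.cos θ + y * Real.sin θ) - W (r : ℝ) θ)

lemma u_eq_GG (x y : ℝ) : u x y = ⨅ θ : Icc (0 : ℝ) (π / 2), GG x y θ := rfl

lemma W_eq (r θ : ℝ) : W r θ = ∑' n, cc 0 n * (r ^ (mIdx n ^ 2) * Real.sin (mm n * θ)) := by
  unfold W
  rw [← tsum_mul_left]
  refine tsum_congr fun n => ?_
  simp only [cast_mIdx, cc]; ring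

lemma W_exp (s θ : ℝ) : W (Real.exp s) θ = w s θ := by
  rw [W_eq, w, K]
  refine tsum_congr fun n => ?_
  rw [← Real.exp_nat_mul, add_zero]; push_cast; rw [cast_mIdx]

lemma W_continuousOn (θ : ℝ) : ContinuousOn (fun r => W r θ) (Icc 0 1) := by
  simp only [W_eq]
  refine continuousOn_tsum (fun n => by fun_prop) cc_zero_summable ?_
  rintro n r ⟨h0, h1⟩
  rw [norm_mul, norm_mul, Real.norm_eq_abs, Real.norm_eq_abs, Real.norm_eq_abs,
    abs_of_nonneg (pow_nonneg h0 _)]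
  have := mul_le_mul (pow_le_one₀ (n := mIdx n ^ 2) h0 h1) (Real.abs_sin_le_one (mm n * θ)) (abs_nonneg _) zero_le_one
  exact mul_le_of_le_one_right (abs_nonneg _) (by linarith)

lemma GG_bdd (x y θ : ℝ) :
    BddAbove (range fun r : Icc (0 : ℝ) 1 => ((r : ℝ) * (x * Real.cos θ + y * Real.sin θ) - W (r : ℝ) θ)) := by
  have hc : ContinuousOn (fun r : ℝ => r * (x * Real.cos θ + y * Real.sin θ) - W r θ) (Icc 0 1) :=
    (by fun_prop : ContinuousOn (fun r : ℝ => r * (x * Real.cos θ + y * Real.sin θ)) (Icc 0 1)).sub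
      (W_continuousOn θ)
  obtain ⟨M, hM⟩ := isCompact_Icc.bddAbove_image hc
  refine ⟨M, ?_⟩
  rintro _ ⟨r, rfl⟩
  exact hM ⟨r, r.2, rfl⟩

lemma GG_ge_one (x y θ : ℝ) : x * Real.cos θ + y * Real.sin θ - w 0 θ ≤ GG x y θ := by
  have := le_ciSup (GG_bdd x y θ) ⟨1, by simp⟩
  simp only [one_mul] at this
  have e : W 1 θ = w 0 θ := by simpa using W_exp 0 θ
  rw [e] at this
  exact this

lemma w_zero_left (s : ℝ) : w s 0 = 0 := by simp [w, K]

lemma GG_zero_ge (x y : ℝ) : x ≤ GG x y 0 := by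
  have := GG_ge_one x y 0
  rw [w_zero_left] at this
  simpa using this

lemma w_pi_div_two (s : ℝ) : w s (π / 2) = 0 := by
  rw [← w_zero_left s, ← w_reflect s 0, sub_zero]

lemma GG_pi_div_two_ge (x y : ℝ) : y ≤ GG x y (π / 2) := by
  have := GG_ge_one x y (π / 2)
  rw [w_pi_div_two] at this
  simpa using this

lemma FF_deriv_s (x y : ℝ) {s : ℝ} (hs : s < 0) (θ : ℝ) :
    HasDerivAt (fun s => FF x y s θ) (Real.exp s * (x * Real.cos θ + y * Real.sin θ) - ws s θ) s :=
  ((Real.hasDerivAt_exp s).mul_const _).sub (comp_s (w_fderiv hs θ))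

/-- `e^{-s} w_s` is strictly increasing in `s < 0`; hence `F(·,θ)` is unimodal. -/
lemma N_strictMono {θ : ℝ} (h0 : 0 < θ) (h1 : θ < π / 2) :
    StrictMonoOn (fun s => Real.exp (-s) * ws s θ) (Iio 0) := by
  have hd : ∀ s < 0, HasDerivAt (fun s => Real.exp (-s) * ws s θ) (Real.exp (-s) * (wss s θ - ws s θ)) s :=
    fun s hs => (((hasDerivAt_neg s).exp).mul (comp_s (ws_fderiv hs θ))).congr_deriv (by ring)
  refine strictMonoOn_of_deriv_pos (convex_Iio 0)
    (fun s hs => (hd s hs).continuousAt.continuousWithinAt) fun s hs => ?_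
  rw [interior_Iio] at hs
  rw [(hd s hs).deriv]
  exact mul_pos (Real.exp_pos _) (Mm_pos hs h0 h1)

lemma Fs_sign {s L : ℝ} (θ : ℝ) :
    Real.exp s * L - ws s θ = Real.exp s * (L - Real.exp (-s) * ws s θ) := by
  have : Real.exp s * Real.exp (-s) = 1 := by rw [← Real.exp_add]; simp
  linear_combination (ws s θ) * this

lemma crit_unique {θ : ℝ} (h0 : 0 < θ) (h1 : θ < π / 2) {L s t : ℝ} (hs : s < 0) (ht : t < 0)
    (es : ws s θ = Real.exp s * L) (et : ws t θ = Real.exp t * L) : s = t := by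
  refine (N_strictMono h0 h1).injOn hs ht ?_
  simp only [es, et, ← mul_assoc, ← Real.exp_add]; simp

/-- A critical point of `F(·,θ)` is its maximum over `s < 0`. -/
lemma FF_le {x y θ : ℝ} (h0 : 0 < θ) (h1 : θ < π / 2) {σ : ℝ} (hσ : σ < 0)
    (e : ws σ θ = Real.exp σ * (x * Real.cos θ + y * Real.sin θ)) {s : ℝ} (hs : s < 0) :
    FF x y s θ ≤ FF x y σ θ := by
  set L := x * Real.cos θ + y * Real.sin θ with hL
  have hN : Real.exp (-σ) * ws σ θ = L := by rw [e, ← mul_assoc, ← Real.exp_add]; simp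
  have hmono := N_strictMono h0 h1
  rcases le_total s σ with h | h
  · have : MonotoneOn (fun s => FF x y s θ) (Iic σ) := by
      refine monotoneOn_of_deriv_nonneg (convex_Iic _)
        (fun t ht => (FF_deriv_s x y (lt_of_le_of_lt ht hσ) θ).continuousAt.continuousWithinAt)
        (fun t ht => ?_) fun t ht => ?_ <;> rw [interior_Iic] at ht <;> have ht0 : t < 0 := lt_trans ht hσ
      · exact (FF_deriv_s x y ht0 θ).differentiableAt.differentiableWithinAt
      · rw [(FF_deriv_s x y ht0 θ).deriv, Fs_sign, ← hL]
        have := hmono ht0 hσ ht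
        simp only [hN] at this
        exact mul_nonneg (Real.exp_nonneg _) (by linarith)
    exact this h self_mem_Iic h
  · have : AntitoneOn (fun s => FF x y s θ) (Ico σ 0) := by
      refine antitoneOn_of_deriv_nonpos (convex_Ico _ _)
        (fun t ht => (FF_deriv_s x y ht.2 θ).continuousAt.continuousWithinAt)
        (fun t ht => ?_) fun t ht => ?_ <;> rw [interior_Ico] at ht
      · exact (FF_deriv_s x y ht.2 θ).differentiableAt.differentiableWithinAt
      · rw [(FF_deriv_s x y ht.2 θ).deriv, Fs_sign, ← hL]
        have := hmono hσ ht.2 ht.1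
        simp only [hN] at this
        exact mul_nonpos_of_nonneg_of_nonpos (Real.exp_nonneg _) (by linarith)
    exact this ⟨le_rfl, hσ⟩ ⟨h, hs⟩ h

/-- The values `r = 0` and `r = 1`, not of the form `e^s` with `s < 0`, follow by continuity. -/
lemma GG_eq {x y θ : ℝ} (h0 : 0 < θ) (h1 : θ < π / 2) {σ : ℝ} (hσ : σ < 0)
    (e : ws σ θ = Real.exp σ * (x * Real.cos θ + y * Real.sin θ)) :
    GG x y θ = FF x y σ θ := by
  refine le_antisymm (ciSup_le ?_) ?_
  · rintro ⟨r, hr⟩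
    have hcl : closure (Ioo (0:ℝ) 1) = Icc 0 1 := closure_Ioo (by norm_num)
    refine le_on_closure (s := Ioo 0 1) (f := fun r : ℝ => r * (x * Real.cos θ + y * Real.sin θ) - W r θ)
      (g := fun _ => FF x y σ θ) ?_ ?_ continuousOn_const (by rw [hcl]; exact hr)
    · rintro r ⟨hr0, hr1⟩
      have := FF_le h0 h1 hσ e (Real.log_neg hr0 hr1)
      rwa [FF, Real.exp_log hr0, ← W_exp, Real.exp_log hr0] at this
    · rw [hcl]
      exact (by fun_prop : ContinuousOn (fun r : ℝ => r * (x * Real.cos θ + y * Real.sin θ)) (Icc 0 1)).sub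
        (W_continuousOn θ)
  · have := le_ciSup (GG_bdd x y θ) ⟨Real.exp σ, (Real.exp_pos _).le, Real.exp_le_one_iff.2 hσ.le⟩
    simp only [W_exp] at this
    exact this

/-- The slowest mode is `m = 2`, whence the rate `e^{4s}`. -/
lemma K_decay {c : ℕ → ℝ} (h : PB c) (φ : ℝ) :
    ∃ C, ∀ s ≤ -1, ∀ θ, |K c φ s θ| ≤ C * Real.exp (4 * (s + 1)) := by
  have hsum := summable_bound h (s₀ := -1) (by norm_num)
  refine ⟨∑' n, |c n| * Real.exp (mm n ^ 2 * -1), fun s hs θ => ?_⟩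
  unfold K
  rw [← Real.norm_eq_abs]
  refine tsum_of_norm_bounded (hsum.hasSum.mul_right _) fun n => ?_
  refine (term_bound c φ s s θ le_rfl n).trans ?_
  rw [mul_assoc, ← Real.exp_add]
  refine mul_le_mul_of_nonneg_left (Real.exp_le_exp.2 ?_) (abs_nonneg _)
  have := mm_ge n
  have h4 : 4 ≤ mm n ^ 2 := by nlinarith
  nlinarith

/-- Existence of the critical `s` of `F(·,θ)`: `e^{-s} w_s` tends to `0` as `s → -∞`, and near `s = 0` it
exceeds `L` by `ws_liminf`. -/
lemma exists_sigma {θ : ℝ} (h0 : 0 < θ) (h1 : θ < π / 2) {L : ℝ} (hL : 0 < L)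
    (hL' : L < Real.cos θ + Real.sin θ) : ∃ σ < 0, ws σ θ = Real.exp σ * L := by
  obtain ⟨C, hC⟩ := K_decay (cc_PB 2) 0
  have htend : Tendsto (fun s : ℝ => C * Real.exp (3 * s + 4)) atBot (𝓝 0) := by
    have : Tendsto (fun s : ℝ => 3 * s + 4) atBot atBot :=
      tendsto_atBot_add_const_right _ _ (tendsto_id.const_mul_atBot (by norm_num))
    simpa using (Real.tendsto_exp_atBot.comp this).const_mul C
  obtain ⟨a, ha, ha1⟩ := ((htend.eventually_lt_const hL).and (eventually_le_atBot (-1))).exists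
  have hNa : Real.exp (-a) * ws a θ < L := by
    have h2 := le_of_abs_le (hC a ha1 θ)
    have h3 : Real.exp (-a) * ws a θ ≤ Real.exp (-a) * (C * Real.exp (4 * (a + 1))) :=
      mul_le_mul_of_nonneg_left h2 (Real.exp_nonneg _)
    have h4 : Real.exp (-a) * (C * Real.exp (4 * (a + 1))) = C * Real.exp (3 * a + 4) := by
      rw [show 3 * a + 4 = -a + 4 * (a + 1) by ring, Real.exp_add]; ring
    linarith
  obtain ⟨b, hb, hbI⟩ := ((ws_liminf h0 h1 hL').and
    (Ioo_mem_nhdsLT (show a < 0 by linarith))).exists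
  have hNb : L < Real.exp (-b) * ws b θ := by
    have : 1 < Real.exp (-b) := Real.one_lt_exp_iff.2 (by linarith [hbI.2])
    nlinarith
  have hcont : ContinuousOn (fun s => Real.exp (-s) * ws s θ) (Icc a b) := fun s hs =>
    ((by fun_prop : Continuous fun s : ℝ => Real.exp (-s)).continuousAt.mul
      (comp_s (ws_fderiv (lt_of_le_of_lt hs.2 hbI.2) θ)).continuousAt).continuousWithinAt
  obtain ⟨σ, hσ, hσe⟩ := intermediate_value_Icc hbI.1.le hcont ⟨hNa.le, hNb.le⟩
  refine ⟨σ, lt_of_le_of_lt hσ.2 hbI.2, ?_⟩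
  simp only at hσe
  rw [← hσe, ← mul_assoc, ← Real.exp_add]; simp

/-! ### The outer minimum and critical points -/

lemma LL_deriv (x y θ : ℝ) : HasDerivAt (fun θ => x * Real.cos θ + y * Real.sin θ)
    (-x * Real.sin θ + y * Real.cos θ) θ :=
  (((Real.hasDerivAt_cos θ).const_mul x).add ((Real.hasDerivAt_sin θ).const_mul y)).congr_deriv (by ring)

lemma LT_deriv (x y θ : ℝ) : HasDerivAt (fun θ => -x * Real.sin θ + y * Real.cos θ)
    (-(x * Real.cos θ + y * Real.sin θ)) θ :=
  (((Real.hasDerivAt_sin θ).const_mul (-x)).add ((Real.hasDerivAt_cos θ).const_mul y)).congr_deriv (by ring)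

/-- Chain rule along a curve `θ ↦ (σ θ, θ)`. -/
lemma comp_curve {f : ℝ → ℝ → ℝ} {a b σ' θ : ℝ} {σ : ℝ → ℝ}
    (h : HasFDerivAt (fun p : ℝ × ℝ => f p.1 p.2) (lf a b) (σ θ, θ)) (hσ : HasDerivAt σ σ' θ) :
    HasDerivAt (fun θ => f (σ θ) θ) (a * σ' + b) θ := by
  have := h.comp_hasDerivAt (f := fun θ => (σ θ, θ)) θ (hσ.prodMk (hasDerivAt_id θ))
  exact this.congr_deriv (by simp)

/-- `σ` selects, for every `θ ∈ (0, π/2)`, the critical point of `F(·,θ)`. -/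
def IsSel (x y : ℝ) (σ : ℝ → ℝ) : Prop :=
  ∀ θ ∈ Ioo 0 (π / 2), σ θ < 0 ∧ ws (σ θ) θ = Real.exp (σ θ) * (x * Real.cos θ + y * Real.sin θ)

lemma exists_sel {x y : ℝ} (hx : x ∈ Ioo (0 : ℝ) 1) (hy : y ∈ Ioo (0 : ℝ) 1) : ∃ σ, IsSel x y σ := by
  have : ∀ θ, ∃ σ, θ ∈ Ioo 0 (π / 2) → σ < 0 ∧ ws σ θ = Real.exp σ * (x * Real.cos θ + y * Real.sin θ) := by
    intro θ
    by_cases h : θ ∈ Ioo 0 (π / 2)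
    · have hc : 0 < Real.cos θ := Real.cos_pos_of_mem_Ioo ⟨by linarith [h.1, Real.pi_pos], h.2⟩
      have hs : 0 < Real.sin θ := Real.sin_pos_of_pos_of_lt_pi h.1 (by linarith [h.2, Real.pi_pos])
      obtain ⟨σ, h1, h2⟩ := exists_sigma h.1 h.2 (L := x * Real.cos θ + y * Real.sin θ)
        (by have := hx.1; have := hy.1; positivity) (by nlinarith [hx.2, hy.2])
      exact ⟨σ, fun _ => ⟨h1, h2⟩⟩
    · exact ⟨0, fun h' => absurd h' h⟩
  choose σ hσ using this
  exact ⟨σ, hσ⟩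

/-- Differentiability of the selection, from the implicit function theorem:
`∂_s (w_s - e^s L) = w_ss - w_s > 0` at a critical point. -/
lemma sel_differentiable {x y : ℝ} {σ : ℝ → ℝ} (hσ : IsSel x y σ) {θ : ℝ} (h : θ ∈ Ioo 0 (π / 2)) :
    DifferentiableAt ℝ σ θ := by
  obtain ⟨hs, he⟩ := hσ θ h
  set f : ℝ × ℝ → ℝ := fun p => ws p.2 p.1 - Real.exp p.2 * (x * Real.cos p.1 + y * Real.sin p.1) with hf
  have hcd : ContDiffAt ℝ 1 f (θ, σ θ) := by
    refine ContDiffAt.sub ?_ (by fun_prop)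
    exact (K_contDiffAt 1 (cc_PB 2) 0 hs θ).comp (θ, σ θ) (f := fun p : ℝ × ℝ => (p.2, p.1))
      (contDiffAt_snd.prodMk contDiffAt_fst)
  have dfu := hcd.hasStrictFDerivAt one_ne_zero
  set f' := fderiv ℝ f (θ, σ θ) with hf'
  have hval : f' (0, 1) = wss (σ θ) θ - ws (σ θ) θ := by
    have h1 : HasDerivAt (fun s => f (θ, s)) (f' (0, 1)) (σ θ) := by
      have := dfu.hasFDerivAt.comp_hasDerivAt (σ θ) ((hasDerivAt_const (σ θ) θ).prodMk (hasDerivAt_id (σ θ)))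
      exact this
    have h2 : HasDerivAt (fun s => f (θ, s)) (wss (σ θ) θ - ws (σ θ) θ) (σ θ) := by
      refine ((comp_s (ws_fderiv hs θ)).sub ((Real.hasDerivAt_exp (σ θ)).mul_const
        (x * Real.cos θ + y * Real.sin θ))).congr_deriv ?_
      rw [← he]
    exact h1.unique h2
  have hne : f' (0, 1) ≠ 0 := by rw [hval]; exact (Mm_pos hs h.1 h.2).ne'
  have if2 : (f' ∘L .inr ℝ ℝ ℝ).IsInvertible := by
    refine ⟨ContinuousLinearEquiv.unitsEquivAut ℝ (Units.mk0 _ hne), ?_⟩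
    ext
    simp
  have hψ := (dfu.hasStrictFDerivAt_implicitFunctionOfProdDomain if2).hasFDerivAt.differentiableAt
  refine hψ.congr_of_eventuallyEq ?_
  have hneg : ∀ᶠ t in 𝓝 θ, dfu.implicitFunctionOfProdDomain if2 t < 0 :=
    (dfu.tendsto_implicitFunctionOfProdDomain if2).eventually_lt_const hs
  filter_upwards [dfu.eventually_apply_implicitFunctionOfProdDomain if2, hneg,
    Ioo_mem_nhds h.1 h.2] with t ht ht0 htI
  obtain ⟨a, b⟩ := hσ t htI
  refine crit_unique htI.1 htI.2 a ht0 b ?_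
  have h0 : f (θ, σ θ) = 0 := by simp only [hf, he, sub_self]
  rw [h0] at ht
  simp only [hf] at ht
  linarith

lemma FF_fderiv (x y : ℝ) {s : ℝ} (hs : s < 0) (θ : ℝ) :
    HasFDerivAt (fun p : ℝ × ℝ => FF x y p.1 p.2)
      (lf (Real.exp s * (x * Real.cos θ + y * Real.sin θ) - ws s θ)
        (Real.exp s * (-x * Real.sin θ + y * Real.cos θ) - wt s θ)) (s, θ) := by
  have h1 : HasFDerivAt (fun p : ℝ × ℝ => p.1) (ContinuousLinearMap.fst ℝ ℝ ℝ) (s, θ) := hasFDerivAt_fst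
  have h2 : HasFDerivAt (fun p : ℝ × ℝ => p.2) (ContinuousLinearMap.snd ℝ ℝ ℝ) (s, θ) := hasFDerivAt_snd
  have := (h1.exp.mul ((LL_deriv x y θ).comp_hasFDerivAt (s, θ) h2)).sub (w_fderiv hs θ)
  refine this.congr_fderiv ?_
  ext <;> simp <;> ring

lemma Fs_fderiv (x y : ℝ) {s : ℝ} (hs : s < 0) (θ : ℝ) :
    HasFDerivAt (fun p : ℝ × ℝ => Real.exp p.1 * (x * Real.cos p.2 + y * Real.sin p.2) - ws p.1 p.2)
      (lf (Real.exp s * (x * Real.cos θ + y * Real.sin θ) - wss s θ)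
        (Real.exp s * (-x * Real.sin θ + y * Real.cos θ) - wst s θ)) (s, θ) := by
  have h1 : HasFDerivAt (fun p : ℝ × ℝ => p.1) (ContinuousLinearMap.fst ℝ ℝ ℝ) (s, θ) := hasFDerivAt_fst
  have h2 : HasFDerivAt (fun p : ℝ × ℝ => p.2) (ContinuousLinearMap.snd ℝ ℝ ℝ) (s, θ) := hasFDerivAt_snd
  have := (h1.exp.mul ((LL_deriv x y θ).comp_hasFDerivAt (s, θ) h2)).sub (ws_fderiv hs θ)
  refine this.congr_fderiv ?_
  ext <;> simp <;> ring

lemma Ft_fderiv (x y : ℝ) {s : ℝ} (hs : s < 0) (θ : ℝ) :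
    HasFDerivAt (fun p : ℝ × ℝ => Real.exp p.1 * (-x * Real.sin p.2 + y * Real.cos p.2) - wt p.1 p.2)
      (lf (Real.exp s * (-x * Real.sin θ + y * Real.cos θ) - wst s θ)
        (-(Real.exp s * (x * Real.cos θ + y * Real.sin θ) - ws s θ))) (s, θ) := by
  have h1 : HasFDerivAt (fun p : ℝ × ℝ => p.1) (ContinuousLinearMap.fst ℝ ℝ ℝ) (s, θ) := hasFDerivAt_fst
  have h2 : HasFDerivAt (fun p : ℝ × ℝ => p.2) (ContinuousLinearMap.snd ℝ ℝ ℝ) (s, θ) := hasFDerivAt_snd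
  have := (h1.exp.mul ((LT_deriv x y θ).comp_hasFDerivAt (s, θ) h2)).sub (wt_fderiv hs θ)
  refine this.congr_fderiv ?_
  ext <;> simp <;> ring

/-- `∂F/∂θ` along the selection; by the envelope theorem this is the derivative of the inner maximum. -/
noncomputable def hh (x y : ℝ) (σ : ℝ → ℝ) (θ : ℝ) : ℝ :=
  Real.exp (σ θ) * (-x * Real.sin θ + y * Real.cos θ) - wt (σ θ) θ

lemma gg_deriv {x y : ℝ} {σ : ℝ → ℝ} (hσ : IsSel x y σ) {θ : ℝ} (h : θ ∈ Ioo 0 (π / 2)) :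
    HasDerivAt (fun θ => FF x y (σ θ) θ) (hh x y σ θ) θ := by
  obtain ⟨hs, he⟩ := hσ θ h
  refine (comp_curve (FF_fderiv x y hs θ) (sel_differentiable hσ h).hasDerivAt).congr_deriv ?_
  rw [he, hh]; ring

/-- By the heat equation `F_θθ = -F_s = 0` along the selection, so the second derivative of the
inner maximum is `F_{sθ}² / (w_ss - w_s) ≥ 0`. -/
lemma hh_deriv {x y : ℝ} {σ : ℝ → ℝ} (hσ : IsSel x y σ) {θ : ℝ} (h : θ ∈ Ioo 0 (π / 2)) :
    HasDerivAt (hh x y σ) ((wss (σ θ) θ - ws (σ θ) θ) * deriv σ θ ^ 2) θ := by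
  obtain ⟨hs, he⟩ := hσ θ h
  have hd := (sel_differentiable hσ h).hasDerivAt
  have h1 := comp_curve (f := fun s θ => Real.exp s * (x * Real.cos θ + y * Real.sin θ) - ws s θ)
    (Fs_fderiv x y hs θ) hd
  have h2 : HasDerivAt (fun θ => Real.exp (σ θ) * (x * Real.cos θ + y * Real.sin θ) - ws (σ θ) θ) 0 θ := by
    refine (hasDerivAt_const θ (0 : ℝ)).congr_of_eventuallyEq ?_
    filter_upwards [Ioo_mem_nhds h.1 h.2] with t ht
    rw [(hσ t ht).2, sub_self]
  have h3 := h1.unique h2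
  have h4 := comp_curve (f := fun s θ => Real.exp s * (-x * Real.sin θ + y * Real.cos θ) - wt s θ)
    (Ft_fderiv x y hs θ) hd
  refine h4.congr_deriv ?_
  rw [← he] at h3 ⊢
  linear_combination deriv σ θ * h3

lemma hh_mono {x y : ℝ} {σ : ℝ → ℝ} (hσ : IsSel x y σ) : MonotoneOn (hh x y σ) (Ioo 0 (π / 2)) := by
  refine monotoneOn_of_deriv_nonneg (convex_Ioo _ _)
    (fun t ht => (hh_deriv hσ ht).continuousAt.continuousWithinAt)
    (fun t ht => ?_) fun t ht => ?_ <;> rw [interior_Ioo] at ht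
  · exact (hh_deriv hσ ht).differentiableAt.differentiableWithinAt
  · rw [(hh_deriv hσ ht).deriv]
    exact mul_nonneg (Mm_pos (hσ t ht).1 ht.1 ht.2).le (sq_nonneg _)

/-- Since the boundary value `w_θ(0,0) = 1` exceeds `y`, the inner maximum decreases near `θ = 0`. The value
`x` on the right is a lower bound for the inner maximum at `θ = 0` itself. -/
lemma near_zero {x y : ℝ} (hx : x ∈ Ioo (0 : ℝ) 1) (hy : y ∈ Ioo (0 : ℝ) 1) {σ : ℝ → ℝ} (hσ : IsSel x y σ) :
    ∃ θ ∈ Ioo 0 (π / 2), hh x y σ θ < 0 ∧ FF x y (σ θ) θ < x := by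
  have hp := Real.pi_pos
  have hq : ContinuousOn (fun p : ℝ × ℝ => Real.exp p.1 * (-x * Real.sin p.2 + y * Real.cos p.2) - wt p.1 p.2)
      (Iic 0 ×ˢ univ) := ContinuousOn.sub (by fun_prop) wt_continuousOn
  have hw0 : wt 0 0 = 1 := by rw [wt_zero le_rfl (by linarith)]; simp
  obtain ⟨η, hη, hη'⟩ := Metric.continuousWithinAt_iff.1 (hq (0, 0) ⟨by simp, mem_univ _⟩)
    (1 - y) (by linarith [hy.2])
  have hneg : ∀ s t, -η < s → s ≤ 0 → 0 ≤ t → t < η →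
      Real.exp s * (-x * Real.sin t + y * Real.cos t) - wt s t < 0 := fun s t h1 h2 h3 h4 => by
    have := hη' (x := (s, t)) ⟨h2, mem_univ _⟩ (by
      rw [Prod.dist_eq, Real.dist_eq, Real.dist_eq]
      refine max_lt ?_ ?_ <;> rw [sub_zero, abs_lt] <;> constructor <;> linarith)
    simp only [Real.dist_eq, hw0, Real.exp_zero, Real.sin_zero, Real.cos_zero] at this
    have := (abs_lt.1 this).2
    linarith
  -- `F_s(ρ, 0) = e^ρ x > 0`, so for small `θ` the maximizer satisfies `σ θ > ρ` and lies where `hneg` applies.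
  set ρ := -(η / 2) with hρ
  have hρ0 : ρ < 0 := by linarith
  have hc : ContinuousAt (fun t => Real.exp ρ * (x * Real.cos t + y * Real.sin t) - ws ρ t) 0 :=
    (((LL_deriv x y 0).continuousAt).const_mul _).sub (comp_t (ws_fderiv hρ0 0)).continuousAt
  have hpos : 0 < Real.exp ρ * (x * Real.cos 0 + y * Real.sin 0) - ws ρ 0 := by
    have : ws ρ 0 = 0 := by simp [ws, K]
    rw [this]; simp; exact mul_pos (Real.exp_pos _) hx.1
  have hev := (hc.tendsto.mono_left (nhdsWithin_le_nhds (s := Ioi 0))).eventually_const_lt hpos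
  obtain ⟨θ, hθ1, hθ2⟩ := (hev.and (Ioo_mem_nhdsGT (show 0 < min η (π / 2) by positivity))).exists
  have hθη : θ < η := hθ2.2.trans_le (min_le_left _ _)
  have hθp : θ < π / 2 := hθ2.2.trans_le (min_le_right _ _)
  have hI : θ ∈ Ioo 0 (π / 2) := ⟨hθ2.1, hθp⟩
  obtain ⟨hs, he⟩ := hσ θ hI
  have hlt : ρ < σ θ := by
    by_contra hcon
    push Not at hcon
    have h1 := (N_strictMono hI.1 hI.2).monotoneOn hs hρ0 hcon
    rw [he, ← mul_assoc, ← Real.exp_add, neg_add_cancel, Real.exp_zero, one_mul] at h1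
    rw [Fs_sign] at hθ1
    have := pos_of_mul_pos_right hθ1 (Real.exp_nonneg _)
    linarith
  refine ⟨θ, hI, hneg _ _ (by linarith) hs.le hI.1.le hθη, ?_⟩
  have hanti : StrictAntiOn (fun t => FF x y (σ θ) t) (Icc 0 θ) := by
    have hd := fun t => comp_t (FF_fderiv x y hs t)
    refine strictAntiOn_of_deriv_neg (convex_Icc _ _)
      (fun t _ => (hd t).continuousAt.continuousWithinAt) fun t ht => ?_
    rw [interior_Icc] at ht
    rw [(hd t).deriv]
    exact hneg _ _ (by linarith) hs.le ht.1.le (by linarith [ht.2])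
  have h1 := hanti ⟨le_rfl, hI.1.le⟩ ⟨hI.1.le, le_rfl⟩ hI.1
  have h2 : FF x y (σ θ) 0 = Real.exp (σ θ) * x := by simp [FF, w_zero_left]
  simp only [h2] at h1
  have h3 : Real.exp (σ θ) < 1 := Real.exp_lt_one_iff.2 hs
  nlinarith [hx.1]

/-- The mirror image of `near_zero` under `(x, y, θ) ↦ (y, x, π/2 - θ)`. -/
lemma near_pi_div_two {x y : ℝ} (hx : x ∈ Ioo (0 : ℝ) 1) (hy : y ∈ Ioo (0 : ℝ) 1) {σ : ℝ → ℝ}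
    (hσ : IsSel x y σ) : ∃ θ ∈ Ioo 0 (π / 2), 0 < hh x y σ θ ∧ FF x y (σ θ) θ < y := by
  have hσ' : IsSel y x (fun θ => σ (π / 2 - θ)) := fun θ h => by
    obtain ⟨a, b⟩ := hσ (π / 2 - θ) ⟨by linarith [h.2], by linarith [h.1]⟩
    rw [ws_reflect, Real.cos_pi_div_two_sub, Real.sin_pi_div_two_sub] at b
    exact ⟨a, by rw [b]; ring⟩
  obtain ⟨θ, h, h1, h2⟩ := near_zero hy hx hσ'
  refine ⟨π / 2 - θ, ⟨by linarith [h.2], by linarith [h.1]⟩, ?_, ?_⟩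
  · unfold hh at h1 ⊢
    rw [wt_reflect, Real.cos_pi_div_two_sub, Real.sin_pi_div_two_sub]
    linarith
  · unfold FF at h2 ⊢
    rw [w_reflect, Real.cos_pi_div_two_sub, Real.sin_pi_div_two_sub]
    linarith

/-- `(s,θ)` is an interior critical point of `F`. -/
def IsCrit (x y s θ : ℝ) : Prop :=
  s < 0 ∧ θ ∈ Ioo 0 (π / 2) ∧ ws s θ = Real.exp s * (x * Real.cos θ + y * Real.sin θ) ∧
    wt s θ = Real.exp s * (-x * Real.sin θ + y * Real.cos θ)

lemma exists_crit {x y : ℝ} (hx : x ∈ Ioo (0 : ℝ) 1) (hy : y ∈ Ioo (0 : ℝ) 1) :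
    ∃ s θ, IsCrit x y s θ := by
  obtain ⟨σ, hσ⟩ := exists_sel hx hy
  obtain ⟨a, ha, ha1, -⟩ := near_zero hx hy hσ
  obtain ⟨b, hb, hb1, -⟩ := near_pi_div_two hx hy hσ
  obtain ⟨θ, hθ, h0⟩ := isPreconnected_Ioo.intermediate_value ha hb
    (fun t ht => (hh_deriv hσ ht).continuousAt.continuousWithinAt) (show (0:ℝ) ∈ Icc _ _ from ⟨ha1.le, hb1.le⟩)
  refine ⟨σ θ, θ, (hσ θ hθ).1, hθ, (hσ θ hθ).2, ?_⟩
  unfold hh at h0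
  linarith

/-- The minimax value equals the critical value, by convexity of the inner maximum in `θ`. -/
lemma u_eq_of_crit {x y s θ : ℝ} (hx : x ∈ Ioo (0 : ℝ) 1) (hy : y ∈ Ioo (0 : ℝ) 1) (h : IsCrit x y s θ) :
    u x y = FF x y s θ := by
  have hp := Real.pi_pos
  obtain ⟨hs, hθ, e1, e2⟩ := h
  obtain ⟨σ, hσ⟩ := exists_sel hx hy
  have hsσ : s = σ θ := crit_unique hθ.1 hθ.2 hs (hσ θ hθ).1 e1 (hσ θ hθ).2
  have hh0 : hh x y σ θ = 0 := by rw [hh, ← hsσ, e2, sub_self]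
  have hmin : ∀ t ∈ Ioo 0 (π / 2), FF x y (σ θ) θ ≤ FF x y (σ t) t := by
    intro t ht
    rcases le_total t θ with htθ | htθ
    · have : AntitoneOn (fun t => FF x y (σ t) t) (Ioc 0 θ) := by
        have hI : ∀ t ∈ Ioc 0 θ, t ∈ Ioo 0 (π / 2) := fun t ht => ⟨ht.1, lt_of_le_of_lt ht.2 hθ.2⟩
        refine antitoneOn_of_deriv_nonpos (convex_Ioc _ _)
          (fun t ht => (gg_deriv hσ (hI t ht)).continuousAt.continuousWithinAt)
          (fun t ht => (gg_deriv hσ (hI t (interior_subset ht))).differentiableAt.differentiableWithinAt)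
          fun t ht => ?_
        have ht' := interior_subset ht
        rw [(gg_deriv hσ (hI t ht')).deriv, ← hh0]
        exact hh_mono hσ (hI t ht') hθ ht'.2
      exact this ⟨ht.1, htθ⟩ ⟨hθ.1, le_rfl⟩ htθ
    · have : MonotoneOn (fun t => FF x y (σ t) t) (Ico θ (π / 2)) := by
        have hI : ∀ t ∈ Ico θ (π / 2), t ∈ Ioo 0 (π / 2) := fun t ht => ⟨lt_of_lt_of_le hθ.1 ht.1, ht.2⟩
        refine monotoneOn_of_deriv_nonneg (convex_Ico _ _)
          (fun t ht => (gg_deriv hσ (hI t ht)).continuousAt.continuousWithinAt)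
          (fun t ht => (gg_deriv hσ (hI t (interior_subset ht))).differentiableAt.differentiableWithinAt)
          fun t ht => ?_
        have ht' := interior_subset ht
        rw [(gg_deriv hσ (hI t ht')).deriv, ← hh0]
        exact hh_mono hσ hθ (hI t ht') ht'.1
      exact this ⟨le_rfl, hθ.2⟩ ⟨htθ, ht.2⟩ htθ
  have hall : ∀ t ∈ Icc 0 (π / 2), FF x y (σ θ) θ ≤ GG x y t := by
    intro t ht
    rcases eq_or_lt_of_le ht.1 with rfl | h0
    · obtain ⟨a, ha, -, ha2⟩ := near_zero hx hy hσ
      exact ((hmin a ha).trans ha2.le).trans (GG_zero_ge x y)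
    rcases eq_or_lt_of_le ht.2 with rfl | h1
    · obtain ⟨a, ha, -, ha2⟩ := near_pi_div_two hx hy hσ
      exact ((hmin a ha).trans ha2.le).trans (GG_pi_div_two_ge x y)
    · rw [GG_eq h0 h1 (hσ t ⟨h0, h1⟩).1 (hσ t ⟨h0, h1⟩).2]
      exact hmin t ⟨h0, h1⟩
  rw [hsσ, u_eq_GG]
  have : Nonempty (Icc (0:ℝ) (π / 2)) := ⟨⟨θ, hθ.1.le, hθ.2.le⟩⟩
  refine le_antisymm ?_ (le_ciInf fun t => hall t t.2)
  rw [← GG_eq hθ.1 hθ.2 (hσ θ hθ).1 (hσ θ hθ).2]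
  refine ciInf_le (f := fun t : Icc (0:ℝ) (π / 2) => GG x y t) ⟨FF x y (σ θ) θ, ?_⟩ ⟨θ, hθ.1.le, hθ.2.le⟩
  rintro _ ⟨t, rfl⟩
  exact hall t t.2

/-! ### The inverse of the critical-point map and the equation for u -/

/-- Solving the two critical-point equations for `(x, y)` gives the map `(s,θ) ↦ Φ(s,θ)`;
`IsCrit x y s θ` says `Φ(s,θ) = (x,y)`. -/
noncomputable def Phi (p : ℝ × ℝ) : ℝ × ℝ :=
  (Real.exp (-p.1) * ws p.1 p.2 * Real.cos p.2 - Real.exp (-p.1) * wt p.1 p.2 * Real.sin p.2,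
   Real.exp (-p.1) * ws p.1 p.2 * Real.sin p.2 + Real.exp (-p.1) * wt p.1 p.2 * Real.cos p.2)

lemma exp_mul_exp_neg (s : ℝ) : Real.exp s * Real.exp (-s) = 1 := by rw [← Real.exp_add]; simp

lemma crit_of_Phi {x y s θ : ℝ} (hs : s < 0) (hθ : θ ∈ Ioo 0 (π / 2)) (h : Phi (s, θ) = (x, y)) :
    IsCrit x y s θ := by
  obtain ⟨h1, h2⟩ := Prod.mk.injEq .. ▸ h
  simp only at h1 h2
  refine ⟨hs, hθ, ?_, ?_⟩
  · rw [← h1, ← h2]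
    linear_combination (-ws s θ * (Real.sin θ ^ 2 + Real.cos θ ^ 2)) * exp_mul_exp_neg s
      - ws s θ * Real.sin_sq_add_cos_sq θ
  · rw [← h1, ← h2]
    linear_combination (-wt s θ * (Real.sin θ ^ 2 + Real.cos θ ^ 2)) * exp_mul_exp_neg s
      - wt s θ * Real.sin_sq_add_cos_sq θ

lemma Phi_of_crit {x y s θ : ℝ} (h : IsCrit x y s θ) : Phi (s, θ) = (x, y) := by
  obtain ⟨-, -, h1, h2⟩ := h
  have e1 := exp_mul_exp_neg s
  have e2 := Real.sin_sq_add_cos_sq θ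
  simp only [Phi, h1, h2, Prod.mk.injEq]
  constructor
  · linear_combination x * (Real.sin θ ^ 2 + Real.cos θ ^ 2) * e1 + x * e2
  · linear_combination y * (Real.sin θ ^ 2 + Real.cos θ ^ 2) * e1 + y * e2

lemma Phi_contDiffAt {s : ℝ} (hs : s < 0) (θ : ℝ) : ContDiffAt ℝ 2 Phi (s, θ) := by
  have h1 : ContDiffAt ℝ 2 (fun p : ℝ × ℝ => ws p.1 p.2) (s, θ) := K_contDiffAt 2 (cc_PB 2) 0 hs θ
  have h2 : ContDiffAt ℝ 2 (fun p : ℝ × ℝ => wt p.1 p.2) (s, θ) := K_contDiffAt 2 (cc_PB 1) (π / 2) hs θ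
  have he : ContDiffAt ℝ 2 (fun p : ℝ × ℝ => Real.exp (-p.1)) (s, θ) := by fun_prop
  have hc : ContDiffAt ℝ 2 (fun p : ℝ × ℝ => Real.cos p.2) (s, θ) := by fun_prop
  have hn : ContDiffAt ℝ 2 (fun p : ℝ × ℝ => Real.sin p.2) (s, θ) := by fun_prop
  exact (((he.mul h1).mul hc).sub ((he.mul h2).mul hn)).prodMk (((he.mul h1).mul hn).add ((he.mul h2).mul hc))

/-- The Jacobian matrix of `Phi`, with `A = e^{-s}(w_ss - w_s)` and `B = e^{-s}(w_sθ - w_θ)`;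
its determinant is `-B²`. -/
lemma Phi_fderiv {s : ℝ} (hs : s < 0) (θ : ℝ) {A B : ℝ}
    (hA : A = Real.exp (-s) * (wss s θ - ws s θ)) (hB : B = Real.exp (-s) * (wst s θ - wt s θ)) :
    HasFDerivAt Phi ((lf (A * Real.cos θ - B * Real.sin θ) (B * Real.cos θ)).prod
      (lf (A * Real.sin θ + B * Real.cos θ) (B * Real.sin θ))) (s, θ) := by
  have h1 : HasFDerivAt (fun p : ℝ × ℝ => p.1) (ContinuousLinearMap.fst ℝ ℝ ℝ) (s, θ) := hasFDerivAt_fst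
  have h2 : HasFDerivAt (fun p : ℝ × ℝ => p.2) (ContinuousLinearMap.snd ℝ ℝ ℝ) (s, θ) := hasFDerivAt_snd
  have hN := (h1.neg.exp).mul (ws_fderiv hs θ)
  have hV := (h1.neg.exp).mul (wt_fderiv hs θ)
  have := ((hN.mul h2.cos).sub (hV.mul h2.sin)).prodMk ((hN.mul h2.sin).add (hV.mul h2.cos))
  refine this.congr_fderiv ?_
  subst hA hB
  ext <;> simp <;> ring

/-- The Jacobian of `Phi` as an invertible map, with explicit inverse. -/
noncomputable def jac (A B θ : ℝ) (hB : B ≠ 0) : (ℝ × ℝ) ≃L[ℝ] (ℝ × ℝ) :=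
  ContinuousLinearEquiv.equivOfInverse
    ((lf (A * Real.cos θ - B * Real.sin θ) (B * Real.cos θ)).prod
      (lf (A * Real.sin θ + B * Real.cos θ) (B * Real.sin θ)))
    ((lf (-Real.sin θ / B) (Real.cos θ / B)).prod
      (lf ((A * Real.sin θ + B * Real.cos θ) / B ^ 2) (-(A * Real.cos θ - B * Real.sin θ) / B ^ 2)))
    (fun v => by
      have := Real.sin_sq_add_cos_sq θ
      ext <;> simp <;> field_simp
      · linear_combination B * v.1 * this
      · linear_combination B ^ 2 * v.2 * this)
    (fun v => by
      have := Real.sin_sq_add_cos_sq θ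
      ext <;> simp <;> field_simp
      · linear_combination B * v.1 * this
      · linear_combination B * v.2 * this)

/-- Envelope theorem: if `Ψ` is a differentiable choice of critical points near `p`, then
`∇u = e^s (cos θ, sin θ)` at `(s,θ) = Ψ p`. -/
lemma u_fderiv {Ψ : ℝ × ℝ → ℝ × ℝ} {p : ℝ × ℝ}
    (hu : ∀ᶠ q in 𝓝 p, u q.1 q.2 = FF q.1 q.2 (Ψ q).1 (Ψ q).2)
    (hc : IsCrit p.1 p.2 (Ψ p).1 (Ψ p).2) (hd : DifferentiableAt ℝ Ψ p) :
    HasFDerivAt (fun q : ℝ × ℝ => u q.1 q.2)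
      (lf (Real.exp (Ψ p).1 * Real.cos (Ψ p).2) (Real.exp (Ψ p).1 * Real.sin (Ψ p).2)) p := by
  obtain ⟨hs, hθ, e1, e2⟩ := hc
  have hS := hd.hasFDerivAt.fst
  have hT := hd.hasFDerivAt.snd
  have hX : HasFDerivAt (fun q : ℝ × ℝ => q.1) (ContinuousLinearMap.fst ℝ ℝ ℝ) p := hasFDerivAt_fst
  have hY : HasFDerivAt (fun q : ℝ × ℝ => q.2) (ContinuousLinearMap.snd ℝ ℝ ℝ) p := hasFDerivAt_snd
  have hw : HasFDerivAt (fun q => w (Ψ q).1 (Ψ q).2) _ p :=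
    HasFDerivAt.comp p (g := fun q : ℝ × ℝ => w q.1 q.2) (w_fderiv hs (Ψ p).2) hd.hasFDerivAt
  have := (hS.exp.mul ((hX.mul hT.cos).add (hY.mul hT.sin))).sub hw
  refine (this.congr_fderiv ?_).congr_of_eventuallyEq hu
  refine ContinuousLinearMap.ext fun v => ?_
  simp
  rw [e1, e2]; ring

/-- The claim, from the explicit second derivatives of `u` at a critical point. -/
lemma main_aux {x y : ℝ} (hx : x ∈ Ioo (0 : ℝ) 1) (hy : y ∈ Ioo (0 : ℝ) 1) (hxy : x ≠ y) :
    ContDiffAt ℝ 2 (fun p : ℝ × ℝ => u p.1 p.2) (x, y) ∧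
    (deriv (fun s => u s y) x) ^ 2 * deriv (fun s => deriv (fun s' => u s' y) s) x
      + 2 * deriv (fun s => u s y) x * deriv (fun t => u x t) y
          * deriv (fun t => deriv (fun s => u s t) x) y
      + (deriv (fun t => u x t) y) ^ 2 * deriv (fun t => deriv (fun t' => u x t') t) y = 0 := by
  obtain ⟨s, θ, hcrit⟩ := exists_crit hx hy
  have hPhi := Phi_of_crit hcrit
  obtain ⟨hs, hθ, e1, e2⟩ := hcrit
  -- Off the diagonal the critical angle avoids `π/4`, where the Jacobian of `Φ` degenerates.
  have hne : θ ≠ π / 4 := by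
    rintro rfl
    rw [wt_mid, Real.cos_pi_div_four, Real.sin_pi_div_four] at e2
    have h2 : (√2 / 2 : ℝ) ≠ 0 := by positivity
    have h3 : Real.exp s * (√2 / 2) * (y - x) = 0 := by linarith
    rcases mul_eq_zero.1 h3 with h | h
    · exact absurd h (mul_ne_zero (Real.exp_ne_zero _) h2)
    · exact hxy (by linarith)
  obtain ⟨A, hA⟩ : ∃ A, A = Real.exp (-s) * (wss s θ - ws s θ) := ⟨_, rfl⟩
  obtain ⟨B, hB⟩ : ∃ B, B = Real.exp (-s) * (wst s θ - wt s θ) := ⟨_, rfl⟩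
  have hB0 : B ≠ 0 := by
    rw [hB]; exact mul_ne_zero (Real.exp_ne_zero _) (Cc_ne hs hθ.1 hθ.2 hne)
  have hf := Phi_contDiffAt hs θ
  have hf' : HasFDerivAt Phi ((jac A B θ hB0 : (ℝ × ℝ) ≃L[ℝ] (ℝ × ℝ)) : ℝ × ℝ →L[ℝ] ℝ × ℝ) (s, θ) :=
    Phi_fderiv hs θ hA hB
  -- `Ψ` is the local inverse of `Φ`.
  obtain ⟨Ψ, hΨc, hΨ0, hΨr⟩ : ∃ Ψ : ℝ × ℝ → ℝ × ℝ, ContDiffAt ℝ 2 Ψ (x, y) ∧ Ψ (x, y) = (s, θ) ∧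
      ∀ᶠ p in 𝓝 (x, y), Phi (Ψ p) = p := by
    have n0 : (2 : WithTop ℕ∞) ≠ 0 := two_ne_zero
    refine ⟨hf.localInverse hf' n0, ?_, ?_, ?_⟩
    · have := hf.to_localInverse hf' n0
      rwa [hPhi] at this
    · have := hf.localInverse_apply_image hf' n0
      rwa [hPhi] at this
    · have := (hf.hasStrictFDerivAt' hf' n0).eventually_right_inverse
      rw [hPhi] at this
      exact this
  have hΨcont : Tendsto Ψ (𝓝 (x, y)) (𝓝 (s, θ)) := by
    have := hΨc.continuousAt.tendsto
    rwa [hΨ0] at this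
  have hev : ∀ᶠ p in 𝓝 (x, y), IsCrit p.1 p.2 (Ψ p).1 (Ψ p).2 ∧
      u p.1 p.2 = FF p.1 p.2 (Ψ p).1 (Ψ p).2 ∧ DifferentiableAt ℝ Ψ p := by
    have m1 : Iio (0:ℝ) ×ˢ Ioo 0 (π / 2) ∈ 𝓝 (s, θ) := (isOpen_Iio.prod isOpen_Ioo).mem_nhds ⟨hs, hθ⟩
    have m2 : Ioo (0:ℝ) 1 ×ˢ Ioo (0:ℝ) 1 ∈ 𝓝 (x, y) := (isOpen_Ioo.prod isOpen_Ioo).mem_nhds ⟨hx, hy⟩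
    filter_upwards [hΨr, hΨcont m1, m2, hΨc.eventually (by simp)] with p h1 h2 h3 h4
    have hcr : IsCrit p.1 p.2 (Ψ p).1 (Ψ p).2 := crit_of_Phi h2.1 h2.2 h1
    exact ⟨hcr, u_eq_of_crit h3.1 h3.2 hcr, h4.differentiableAt two_ne_zero⟩
  have hgrad : ∀ᶠ p in 𝓝 (x, y), HasFDerivAt (fun q : ℝ × ℝ => u q.1 q.2)
      (lf (Real.exp (Ψ p).1 * Real.cos (Ψ p).2) (Real.exp (Ψ p).1 * Real.sin (Ψ p).2)) p := by
    filter_upwards [eventually_eventually_nhds.2 hev] with p hp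
    exact u_fderiv (hp.mono fun q hq => hq.2.1) hp.self_of_nhds.1 hp.self_of_nhds.2.2
  have hDΨ : HasFDerivAt Ψ ((jac A B θ hB0).symm : ℝ × ℝ →L[ℝ] ℝ × ℝ) (x, y) :=
    HasFDerivAt.of_local_left_inverse hΨc.continuousAt (by rw [hΨ0]; exact hf') hΨr
  have hS := hDΨ.fst
  have hT := hDΨ.snd
  have hP : HasFDerivAt (fun q : ℝ × ℝ => Real.exp (Ψ q).1 * Real.cos (Ψ q).2)
      (lf (Real.exp s * (Real.cos θ * (-Real.sin θ / B)
            - Real.sin θ * ((A * Real.sin θ + B * Real.cos θ) / B ^ 2)))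
          (Real.exp s * (Real.cos θ * (Real.cos θ / B)
            - Real.sin θ * (-(A * Real.cos θ - B * Real.sin θ) / B ^ 2)))) (x, y) := by
    refine (hS.exp.mul hT.cos).congr_fderiv (ContinuousLinearMap.ext fun v => ?_)
    simp [hΨ0, jac]
    ring
  have hQ : HasFDerivAt (fun q : ℝ × ℝ => Real.exp (Ψ q).1 * Real.sin (Ψ q).2)
      (lf (Real.exp s * (Real.sin θ * (-Real.sin θ / B)
            + Real.cos θ * ((A * Real.sin θ + B * Real.cos θ) / B ^ 2)))
          (Real.exp s * (Real.sin θ * (Real.cos θ / B)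
            + Real.cos θ * (-(A * Real.cos θ - B * Real.sin θ) / B ^ 2)))) (x, y) := by
    refine (hS.exp.mul hT.sin).congr_fderiv (ContinuousLinearMap.ext fun v => ?_)
    simp [hΨ0, jac]
    ring
  have tx : Tendsto (fun a : ℝ => (a, y)) (𝓝 x) (𝓝 (x, y)) :=
    (by fun_prop : Continuous fun a : ℝ => (a, y)).tendsto x
  have ty : Tendsto (fun b : ℝ => (x, b)) (𝓝 y) (𝓝 (x, y)) :=
    (by fun_prop : Continuous fun b : ℝ => (x, b)).tendsto y
  have hg0 := hgrad.self_of_nhds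
  rw [hΨ0] at hg0
  have d1 : deriv (fun a => u a y) x = Real.exp s * Real.cos θ := (comp_s (f := u) hg0).deriv
  have d2 : deriv (fun b => u x b) y = Real.exp s * Real.sin θ := (comp_t (f := u) hg0).deriv
  have d11 := ((comp_s (f := fun a b => Real.exp (Ψ (a, b)).1 * Real.cos (Ψ (a, b)).2) hP).congr_of_eventuallyEq
    (f₁ := fun a => deriv (fun a' => u a' y) a)
    ((tx.eventually hgrad).mono fun a ha => (comp_s (f := u) ha).deriv)).deriv
  have d12 := ((comp_t (f := fun a b => Real.exp (Ψ (a, b)).1 * Real.cos (Ψ (a, b)).2) hP).congr_of_eventuallyEq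
    (f₁ := fun b => deriv (fun a => u a b) x)
    ((ty.eventually hgrad).mono fun a ha => (comp_s (f := u) ha).deriv)).deriv
  have d22 := ((comp_t (f := fun a b => Real.exp (Ψ (a, b)).1 * Real.sin (Ψ (a, b)).2) hQ).congr_of_eventuallyEq
    (f₁ := fun b => deriv (fun b' => u x b') b)
    ((ty.eventually hgrad).mono fun a ha => (comp_t (f := u) ha).deriv)).deriv
  -- `u` is a composition of `C²` maps near `(x, y)`; the equation is an identity in `A`, `B`, `e^s` and
  -- the trigonometric functions.
  refine ⟨?_, ?_⟩
  · have hw : ContDiffAt ℝ 2 (fun q => w (Ψ q).1 (Ψ q).2) (x, y) := by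
      refine ContDiffAt.comp (x, y) (g := fun q : ℝ × ℝ => w q.1 q.2) (f := Ψ) ?_ hΨc
      rw [hΨ0]
      exact K_contDiffAt 2 (cc_PB 0) 0 hs θ
    have h1 := hΨc.fst
    have h2 := hΨc.snd
    refine ContDiffAt.congr_of_eventuallyEq
      (f := fun q : ℝ × ℝ => FF q.1 q.2 (Ψ q).1 (Ψ q).2) ?_ (hev.mono fun q hq => hq.2.1)
    unfold FF
    exact (h1.exp.mul ((contDiffAt_fst.mul h2.cos).add (contDiffAt_snd.mul h2.sin))).sub hw
  · rw [d1, d2, d11, d12, d22]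
    field_simp
    ring

/-- away from the diagonal, `u` is twice (continuously) differentiable and
satisfies `u_x² u_{xx} + 2 u_x u_y u_{xy} + u_y² u_{yy} = 0` classically. -/
theorem stmt13 (x y : ℝ) (hx : x ∈ Ioo (0 : ℝ) 1) (hy : y ∈ Ioo (0 : ℝ) 1) (hxy : x ≠ y) :
    ContDiffAt ℝ 2 (fun p : ℝ × ℝ => u p.1 p.2) (x, y) ∧
    (deriv (fun s => u s y) x) ^ 2 * deriv (fun s => deriv (fun s' => u s' y) s) x
      + 2 * deriv (fun s => u s y) x * deriv (fun t => u x t) y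
          * deriv (fun t => deriv (fun s => u s t) x) y
      + (deriv (fun t => u x t) y) ^ 2 * deriv (fun t => deriv (fun t' => u x t') t) y = 0 := by
  exact main_aux hx hy hxy
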